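/- Suppose L is a metric flag labeled triangulation of the 2-sphere. If D₁ and D₂ are Seifert subcomplexes of L and some Euclidean 4-circuit C of L is contained in both D₁ and D₂, then D₁ = D₂. -/

import Mathlib

open Geometry

/-- The ambient space for our simplicial complexes. -/
abbrev E3 : Type := EuclideanSpace ℝ (Fin 3)

noncomputable instance : DecidableEq E3 := Classical.decEq _

namespace CoxOrb

variable (L : SimplicialComplex ℝ E3) (m : E3 → E3 → ℕ)

/-- `L` is a labeled triangulation of the 2-sphere with edge labeling `m`:
`L` is finite, its underlying space is homeomorphic to the 2-sphere, and `m`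
is symmetric with `m s t ≥ 2` on every edge `{s, t}` of `L`. -/
structure IsLabeledS2 : Prop where
  finite : L.faces.Finite
  sphere : Nonempty (L.space ≃ₜ (Metric.sphere (0 : E3) 1 : Set E3))
  symm : ∀ s t : E3, m s t = m t s
  two_le : ∀ s t : E3, s ≠ t → ({s, t} : Finset E3) ∈ L.faces → 2 ≤ m s t

/-- `L` with labeling `m` is metric flag: three pairwise-joined vertices span a
2-simplex iff the corresponding angle sum `π/m_st + π/m_tu + π/m_us` exceeds `π`. -/
def MetricFlag : Prop :=
  ∀ s t u : E3, s ≠ t → t ≠ u → s ≠ u →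
    ({s, t} : Finset E3) ∈ L.faces → ({t, u} : Finset E3) ∈ L.faces →
    ({s, u} : Finset E3) ∈ L.faces →
    (({s, t, u} : Finset E3) ∈ L.faces ↔
      1 / (m s t : ℝ) + 1 / (m t u : ℝ) + 1 / (m u s : ℝ) > 1)

/-- The link of a vertex `s`, as a set of faces of `L`. -/
def link (s : E3) : Set (Finset E3) :=
  {F | F ∈ L.faces ∧ s ∉ F ∧ insert s F ∈ L.faces}

/-- The closed star of a vertex `s`: all faces of `L` contained in some face
containing `s`. -/
def star (s : E3) : Set (Finset E3) :=
  {F | F ∈ L.faces ∧ ∃ G ∈ L.faces, s ∈ G ∧ F ⊆ G}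

/-- The vertices of the link of `s`. -/
def linkVerts (s : E3) : Set E3 :=
  {v | v ≠ s ∧ ({s, v} : Finset E3) ∈ L.faces}

/-- A set of faces `A` is a full subcomplex of `L`: every face of `L` all of
whose vertices are vertices of `A` belongs to `A`. -/
def IsFullSubcomplex (A : Set (Finset E3)) : Prop :=
  A ⊆ L.faces ∧ ∀ F ∈ L.faces, (∀ v ∈ F, ({v} : Finset E3) ∈ A) → F ∈ A

/-- `s` is a 3-Euclidean vertex of `L`: it has valence three and the labels on
the three edges of its link have reciprocals summing to one. -/
def IsThreeEuclidean (s : E3) : Prop :=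
  ({s} : Finset E3) ∈ L.faces ∧
  ∃ s₀ s₁ s₂ : E3, s₀ ≠ s₁ ∧ s₁ ≠ s₂ ∧ s₀ ≠ s₂ ∧
    linkVerts L s = {s₀, s₁, s₂} ∧
    1 / (m s₀ s₁ : ℝ) + 1 / (m s₁ s₂ : ℝ) + 1 / (m s₂ s₀ : ℝ) = 1

/-- `s` is a 4-Euclidean vertex of `L`: it has valence four, its link is the
4-circuit on `v 0, v 1, v 2, v 3` (in cyclic order), and the labels on the
edges of the link are all `2`. -/
def IsFourEuclidean (s : E3) : Prop :=
  ({s} : Finset E3) ∈ L.faces ∧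
  ∃ v : Fin 4 → E3, Function.Injective v ∧
    linkVerts L s = {v 0, v 1, v 2, v 3} ∧
    (∀ i : Fin 4, ({s, v i, v (i + 1)} : Finset E3) ∈ L.faces) ∧
    (∀ i : Fin 4, m (v i) (v (i + 1)) = 2)

/-- `L` is the boundary complex of a 3-simplex: four pairwise-joined vertices
spanning four 2-simplices. -/
def IsBoundaryOfThreeSimplex : Prop :=
  ∃ a b c d : E3, a ≠ b ∧ a ≠ c ∧ a ≠ d ∧ b ≠ c ∧ b ≠ d ∧ c ≠ d ∧
    (∀ v : E3, ({v} : Finset E3) ∈ L.faces ↔ v = a ∨ v = b ∨ v = c ∨ v = d) ∧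
    ({a, b, c} : Finset E3) ∈ L.faces ∧ ({a, b, d} : Finset E3) ∈ L.faces ∧
    ({a, c, d} : Finset E3) ∈ L.faces ∧ ({b, c, d} : Finset E3) ∈ L.faces

/-- `L` is the suspension of a 3-gon. -/
def IsSuspensionOfThreeGon : Prop :=
  ∃ t t' s₀ s₁ s₂ : E3, [t, t', s₀, s₁, s₂].Pairwise (· ≠ ·) ∧
    (∀ v : E3, ({v} : Finset E3) ∈ L.faces ↔ v = t ∨ v = t' ∨ v = s₀ ∨ v = s₁ ∨ v = s₂) ∧
    ({s₀, s₁} : Finset E3) ∈ L.faces ∧ ({s₁, s₂} : Finset E3) ∈ L.faces ∧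
    ({s₀, s₂} : Finset E3) ∈ L.faces ∧
    ({t, s₀} : Finset E3) ∈ L.faces ∧ ({t, s₁} : Finset E3) ∈ L.faces ∧
    ({t, s₂} : Finset E3) ∈ L.faces ∧
    ({t', s₀} : Finset E3) ∈ L.faces ∧ ({t', s₁} : Finset E3) ∈ L.faces ∧
    ({t', s₂} : Finset E3) ∈ L.faces ∧
    ({t, t'} : Finset E3) ∉ L.faces

/-- The simplicial join of the subcomplex `Z` with the two points `t, t'`. -/
def joinSusp (Z : Set (Finset E3)) (t t' : E3) : Set (Finset E3) :=
  Z ∪ {{t}, {t'}} ∪ ((fun F => insert t F) '' Z) ∪ ((fun F => insert t' F) '' Z)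

/-- `T` is the right-angled suspension in `L` of the subcomplex `Z` with
suspension points `t, t'` (not joined by an edge of `T`): every edge from a
suspension point to a vertex of `Z` is labeled `2`. -/
structure IsRASuspData (T Z : Set (Finset E3)) (t t' : E3) : Prop where
  subset : T ⊆ L.faces
  zsubset : Z ⊆ L.faces
  zdown : ∀ F ∈ Z, ∀ G : Finset E3, G ⊆ F → G.Nonempty → G ∈ Z
  znonempty : Z.Nonempty
  tne : t ≠ t'
  t_notin : ∀ F ∈ Z, t ∉ F
  t'_notin : ∀ F ∈ Z, t' ∉ F
  labels : ∀ v : E3, ({v} : Finset E3) ∈ Z → m t v = 2 ∧ m t' v = 2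
  eq : T = joinSusp Z t t'

/-- `T` is a right-angled suspension in `L`. -/
def IsRASusp (T : Set (Finset E3)) : Prop :=
  ∃ Z t t', IsRASuspData L m T Z t t'

/-- The base `Z` of the suspension is neither a single vertex nor a single
edge, so that the suspension is infinite. -/
def InfiniteBase (Z : Set (Finset E3)) : Prop :=
  (¬ ∃ v : E3, Z = {({v} : Finset E3)}) ∧
  (¬ ∃ u v : E3, u ≠ v ∧ Z = {({u} : Finset E3), ({v} : Finset E3), ({u, v} : Finset E3)})

/-- `T` is an infinite, maximal right-angled suspension in `L`: it is an
RA-suspension of a full subcomplex which is neither a vertex nor an edge, and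
`T` is not properly contained in another RA-suspension. -/
def IsInfMaxRASusp (T : Set (Finset E3)) : Prop :=
  (∃ Z t t', IsRASuspData L m T Z t t' ∧ InfiniteBase Z ∧ IsFullSubcomplex L Z) ∧
  ∀ T', IsRASusp L m T' → T ⊆ T' → T = T'

/-- `v 0, v 1, v 2, v 3` (in cyclic order) form a Euclidean 4-circuit of `L`:
all four edge labels are `2` and the circuit is not the boundary of the union
of two 2-simplices of `L` sharing an edge. -/
def IsEuclidean4Circuit (v : Fin 4 → E3) : Prop :=
  Function.Injective v ∧
  (∀ i : Fin 4, ({v i, v (i + 1)} : Finset E3) ∈ L.faces) ∧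
  (∀ i : Fin 4, m (v i) (v (i + 1)) = 2) ∧
  ¬ ((({v 0, v 1, v 2} : Finset E3) ∈ L.faces ∧ ({v 0, v 2, v 3} : Finset E3) ∈ L.faces) ∨
     (({v 1, v 2, v 3} : Finset E3) ∈ L.faces ∧ ({v 0, v 1, v 3} : Finset E3) ∈ L.faces))

/-- The subcomplex consisting of the vertices and edges of the 4-circuit `v`. -/
def circuitComplex (v : Fin 4 → E3) : Set (Finset E3) :=
  {F | (∃ i : Fin 4, F = {v i}) ∨ (∃ i : Fin 4, F = {v i, v (i + 1)})}

/-- `T` is the right-angled cone on a Euclidean 4-circuit: the closed star of a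
vertex `c` of valence four whose link is a Euclidean 4-circuit, all four edges
containing `c` being labeled `2`. -/
def IsRAConeOn4Circuit (T : Set (Finset E3)) : Prop :=
  ∃ (c : E3) (v : Fin 4 → E3), IsEuclidean4Circuit L m v ∧
    linkVerts L c = {v 0, v 1, v 2, v 3} ∧
    (∀ i : Fin 4, ({c, v i, v (i + 1)} : Finset E3) ∈ L.faces) ∧
    (∀ i : Fin 4, m c (v i) = 2) ∧
    T = star L c

/-- The generating relation for Seifert subcomplexes: two infinite, maximal
RA-suspensions whose intersection is a Euclidean 4-circuit. -/
def SeifertRel (S S' : Set (Finset E3)) : Prop :=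
  IsInfMaxRASusp L m S ∧ IsInfMaxRASusp L m S' ∧
  ∃ v : Fin 4 → E3, IsEuclidean4Circuit L m v ∧ S ∩ S' = circuitComplex v

/-- `D` is a Seifert subcomplex of `L`: the union of the members of an
equivalence class of infinite, maximal RA-suspensions under the equivalence
relation generated by `SeifertRel`. -/
def IsSeifertSubcomplex (D : Set (Finset E3)) : Prop :=
  ∃ S₀, IsInfMaxRASusp L m S₀ ∧
    D = ⋃₀ {S | IsInfMaxRASusp L m S ∧ Relation.EqvGen (SeifertRel L m) S₀ S}

end CoxOrb

open CoxOrb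

/-!
Planarity enters as Kuratowski's criterion. A drawing of `K₃,₃` or `K₅` is impossible because the
numbers of half turns that its edges make around its vertices would satisfy relations that are
inconsistent modulo 2. In the 1-skeleton of `L`, a 4-circuit `v` therefore separates every common
neighbor `x` of `v 0` and `v 2` from every common neighbor `z ≠ x` of `v 1` and `v 3` off the
circuit.

By maximality and flagness, an infinite maximal right-angled suspension is determined by its
suspension points. If two of them contain the same Euclidean 4-circuit, they are equal or *cross*:
the circuit is their intersection, and its pairs of opposite vertices are their suspension points,
so that they are equivalent. Hence it suffices to find, in an equivalence class whose union contains
a Euclidean 4-circuit, a single member that contains the circuit.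

Consider a path of crossings in the class. A vertex of its first member that is not in the second is
separated from the later members by the circuit in which the first two meet, for otherwise the path
would return to its first member. So no member further along the path gains vertices of the
Euclidean 4-circuit if the first member contains a maximal set of them.
-/

namespace CoxOrb

section LogIncrement

open Complex

/-- `l` is the increment over `[0, 1]` of a continuous logarithm of `f`, that is, `log |f|` and the
argument of `f` change along `[0, 1]` by the real and the imaginary part of `l`. The parameter runs
over all of `ℝ` so that the lifting theorem for simply connected spaces applies to it. -/
def IsLogIncrement (f : ℝ → ℂ) (l : ℂ) : Prop :=
  ∃ g : ℝ → ℂ, Continuous g ∧ (∀ t, exp (g t) = f t) ∧ l = g 1 - g 0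

theorem IsLogIncrement.neg {f : ℝ → ℂ} {l : ℂ} (h : IsLogIncrement f l) :
    IsLogIncrement (fun t => -f t) l := by
  obtain ⟨g, hg, hgf, rfl⟩ := h
  refine ⟨fun t => g t + Real.pi * I, by fun_prop, fun t => ?_, by ring⟩
  rw [exp_add, hgf, exp_pi_mul_I, mul_neg_one]

theorem IsLogIncrement.exists_int {f : ℝ → ℂ} {l z w : ℂ} (h : IsLogIncrement f l)
    (hz : exp z = f 0) (hw : exp w = f 1) : ∃ N : ℤ, l = w - z + N * (2 * Real.pi * I) := by
  obtain ⟨g, -, hgf, rfl⟩ := h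
  obtain ⟨M, hM⟩ := exp_eq_exp_iff_exists_int.1 ((hgf 0).trans hz.symm)
  obtain ⟨N, hN⟩ := exp_eq_exp_iff_exists_int.1 ((hgf 1).trans hw.symm)
  refine ⟨N - M, ?_⟩
  rw [hM, hN]
  push_cast
  ring

theorem IsLogIncrement.unique {f : ℝ → ℂ} {l l' : ℂ} (h : IsLogIncrement f l)
    (h' : IsLogIncrement f l') : l = l' := by
  obtain ⟨g, hg, hgf, rfl⟩ := h
  obtain ⟨g', hg', hgf', rfl⟩ := h'
  obtain ⟨N, hN⟩ := exp_eq_exp_iff_exists_int.1 ((hgf 0).trans (hgf' 0).symm)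
  have hlift : g = fun t => g' t + N * (2 * Real.pi * I) := by
    refine isCoveringMap_exp.eq_of_comp_eq hg (by fun_prop) (funext fun t => Subtype.ext ?_) 0 hN
    exact ((hgf t).trans (hgf' t).symm).trans (exp_eq_exp_iff_exists_int.2 ⟨-N, by simp⟩)
  rw [hlift]
  ring

/-- Both sides are the increment of a logarithm of `γ s - δ t` along a diagonal of the square. -/
theorem exists_isLogIncrement_square {γ δ : ℝ → ℂ} (hγ : Continuous γ) (hδ : Continuous δ)
    (hne : ∀ s t, γ s ≠ δ t) :
    ∃ a b c d : ℂ, IsLogIncrement (fun t => γ 0 - δ t) a ∧ IsLogIncrement (fun t => γ 1 - δ t) b ∧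
      IsLogIncrement (fun s => δ 0 - γ s) c ∧ IsLogIncrement (fun s => δ 1 - γ s) d ∧
      a + d = c + b := by
  obtain ⟨F, ⟨-, hF⟩, -⟩ := isCoveringMapOn_exp.existsUnique_continuousMap_lifts
    (A := ℝ × ℝ) ⟨fun q => γ q.1 - δ q.2, by fun_prop⟩ (a₀ := (0, 0))
    (e₀ := log (γ 0 - δ 0)) (exp_log (sub_ne_zero.2 (hne 0 0)))
    (fun q => sub_ne_zero.2 (hne q.1 q.2))
  have hF' : ∀ s t, exp (F (s, t)) = γ s - δ t := fun s t => congrFun hF (s, t)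
  have hside : ∀ t, IsLogIncrement (fun s => δ t - γ s) (F (1, t) - F (0, t)) := fun t => by
    simpa only [neg_sub] using
      IsLogIncrement.neg ⟨fun s => F (s, t), by fun_prop, fun s => hF' s t, rfl⟩
  exact ⟨F (0, 1) - F (0, 0), F (1, 1) - F (1, 0), F (1, 0) - F (0, 0), F (1, 1) - F (0, 1),
    ⟨fun t => F (0, t), by fun_prop, hF' 0, rfl⟩, ⟨fun t => F (1, t), by fun_prop, hF' 1, rfl⟩,
    hside 0, hside 1, by ring⟩

end LogIncrement

section Drawing

variable {V X Y : Type*}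

/-- A drawing of the graph `G` in the space `X`, up to homotopy of the edges: the vertex `a` is put
at `p a`, and the ends of each edge `e` can be joined by a path inside the region `A e`, where
regions of edges without a common end are disjoint. -/
structure IsDrawing [TopologicalSpace X] (G : SimpleGraph V) (p : V → X) (A : Sym2 V → Set X) :
    Prop where
  injective : Function.Injective p
  joinedIn : ∀ {a b}, G.Adj a b → JoinedIn (A s(a, b)) (p a) (p b)
  disjoint : ∀ {e f}, e ∈ G.edgeSet → f ∈ G.edgeSet → (∀ v ∈ e, v ∉ f) → Disjoint (A e) (A f)

theorem IsDrawing.image [TopologicalSpace X] [TopologicalSpace Y] {G : SimpleGraph V} {p : V → X}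
    {A : Sym2 V → Set X} (h : IsDrawing G p A) {S : Set X} (hp : ∀ a, p a ∈ S)
    (hA : ∀ e ∈ G.edgeSet, A e ⊆ S) {φ : X → Y} (hφ : ContinuousOn φ S) (hinj : S.InjOn φ) :
    IsDrawing G (φ ∘ p) fun e => φ '' A e where
  injective a b hab := h.injective (hinj (hp a) (hp b) hab)
  joinedIn hab := (h.joinedIn hab).map_continuousOn (hφ.mono (hA _ hab))
  disjoint he hf hef := (h.disjoint he hf hef).image hinj (hA _ he) (hA _ hf)

section WindingNumbers

open Complex

theorem exists_int_log_sub_log_neg {z : ℂ} (hz : z ≠ 0) :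
    ∃ s : ℤ, log z - log (-z) = (2 * s - 1) * (Real.pi * I) := by
  have hexp : exp (log z - log (-z)) = exp (Real.pi * I) := by
    rw [exp_sub, exp_log hz, exp_log (neg_ne_zero.2 hz), exp_pi_mul_I, div_neg, div_self hz]
  obtain ⟨N, hN⟩ := exp_eq_exp_iff_exists_int.1 hexp
  refine ⟨N + 1, ?_⟩
  rw [hN]
  push_cast
  ring

theorem exists_half_turns {p : V → ℂ} (hp : Function.Injective p) :
    ∃ s : V → V → ℤ, (∀ a b, a ≠ b → s a b + s b a = 1) ∧ ∀ a b, a ≠ b →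
      log (p a - p b) - log (p b - p a) = (2 * s a b - 1) * (Real.pi * I) := by
  have hhalf : ∀ a b, ∃ s : ℤ, a ≠ b →
      log (p a - p b) - log (p b - p a) = (2 * s - 1) * (Real.pi * I) := fun a b => by
    by_cases hab : a = b
    · exact ⟨0, fun hab' => (hab' hab).elim⟩
    · simpa only [neg_sub, hab, ne_eq, not_false_eq_true, true_imp_iff] using
        exists_int_log_sub_log_neg (sub_ne_zero.2 (hp.ne hab))
  choose s hs using hhalf
  refine ⟨s, fun a b hab => ?_, hs⟩
  suffices ((s a b + s b a : ℤ) : ℂ) = (1 : ℤ) from mod_cast this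
  apply mul_right_cancel₀ (show (Real.pi * I : ℂ) ≠ 0 by simp [Real.pi_ne_zero])
  push_cast
  linear_combination -(hs a b hab + hs b a hab.symm) / 2

theorem exists_turns {p : V → ℂ} (hp : Function.Injective p) (γ : V → V → ℝ → ℂ) :
    ∃ n : V → V → V → ℤ, ∀ v c d, v ≠ c → v ≠ d → γ c d 0 = p c → γ c d 1 = p d → ∀ l,
      IsLogIncrement (fun t => p v - γ c d t) l →
        l = log (p v - p d) - log (p v - p c) + n v c d * (2 * Real.pi * I) := by
  have hlog : ∀ {a b}, a ≠ b → exp (log (p a - p b)) = p a - p b :=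
    fun hab => exp_log (sub_ne_zero.2 (hp.ne hab))
  have hturn : ∀ v c d, ∃ N : ℤ, v ≠ c → v ≠ d → γ c d 0 = p c → γ c d 1 = p d → ∀ l,
      IsLogIncrement (fun t => p v - γ c d t) l →
        l = log (p v - p d) - log (p v - p c) + N * (2 * Real.pi * I) := fun v c d => by
    by_cases hl : ∃ l, v ≠ c ∧ v ≠ d ∧ γ c d 0 = p c ∧ γ c d 1 = p d ∧
        IsLogIncrement (fun t => p v - γ c d t) l
    · obtain ⟨l, hc, hd, h0, h1, hl⟩ := hl
      obtain ⟨N, hN⟩ := hl.exists_int ((hlog hc).trans (by rw [h0])) ((hlog hd).trans (by rw [h1]))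
      exact ⟨N, fun _ _ _ _ l' hl' => (hl'.unique hl).trans hN⟩
    · exact ⟨0, fun hc hd h0 h1 l hl' => (hl ⟨l, hc, hd, h0, h1, hl'⟩).elim⟩
  choose n hn using hturn
  exact ⟨n, hn⟩

variable {G : SimpleGraph V} {p : V → ℂ} {A : Sym2 V → Set ℂ}

/-- Here `n v c d` is the number of turns of the edge `cd` as seen from `v`, after correcting the
angles at its ends by the principal logarithms of `p v - p d` and `p v - p c`, and `s v w` accounts
for the half turn between `p v - p w` and `p w - p v`. -/
theorem IsDrawing.exists_winding_numbers (h : IsDrawing G p A) :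
    ∃ (n : V → V → V → ℤ) (s : V → V → ℤ), (∀ a b, a ≠ b → s a b + s b a = 1) ∧
      ∀ a b c d, G.Adj a b → G.Adj c d → a ≠ c → a ≠ d → b ≠ c → b ≠ d →
        n a c d + n d a b - n b c d - n c a b = s a c - s a d + s b d - s b c := by
  have hpath : ∀ a b, ∃ γ : ℝ → ℂ, G.Adj a b →
      Continuous γ ∧ γ 0 = p a ∧ γ 1 = p b ∧ ∀ t, γ t ∈ A s(a, b) := fun a b => by
    by_cases hab : G.Adj a b
    · obtain ⟨γ, hγ⟩ := h.joinedIn hab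
      exact ⟨γ.extend, fun _ => ⟨γ.continuous_extend, γ.extend_zero, γ.extend_one, fun t => hγ _⟩⟩
    · exact ⟨0, fun hab' => (hab hab').elim⟩
  choose γ hγ using hpath
  obtain ⟨n, hn⟩ := exists_turns h.injective γ
  obtain ⟨s, hs, hlog⟩ := exists_half_turns h.injective
  refine ⟨n, s, hs, fun a b c d hab hcd hac had hbc hbd => ?_⟩
  obtain ⟨hγab, a0, b1, hA⟩ := hγ a b hab
  obtain ⟨hγcd, c0, d1, hC⟩ := hγ c d hcd
  have hdisj : Disjoint (A s(a, b)) (A s(c, d)) := h.disjoint hab hcd (by simp [*])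
  obtain ⟨la, lb, lc, ld, ha, hb, hc, hd, hsum⟩ :=
    exists_isLogIncrement_square hγab hγcd fun t t' => hdisj.ne_of_mem (hA t) (hC t')
  rw [a0] at ha; rw [b1] at hb; rw [c0] at hc; rw [d1] at hd
  rw [hn _ _ _ hac had c0 d1 _ ha, hn _ _ _ hbc hbd c0 d1 _ hb,
    hn _ _ _ hac.symm hbc.symm a0 b1 _ hc, hn _ _ _ had.symm hbd.symm a0 b1 _ hd] at hsum
  suffices ((n a c d + n d a b - n b c d - n c a b : ℤ) : ℂ) =
      (s a c - s a d + s b d - s b c : ℤ) from mod_cast this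
  apply mul_right_cancel₀ (show (Real.pi * I : ℂ) ≠ 0 by simp [Real.pi_ne_zero])
  push_cast
  linear_combination (hsum + hlog a c hac - hlog a d had - hlog b c hbc + hlog b d hbd) / 2

/-- Every winding number occurs in exactly two of the eighteen relations between independent edges,
while their right-hand sides add up to an odd number. -/
theorem IsDrawing.not_completeBipartiteGraph_three_three {p : Fin 3 ⊕ Fin 3 → ℂ}
    {A : Sym2 (Fin 3 ⊕ Fin 3) → Set ℂ} :
    ¬IsDrawing (completeBipartiteGraph (Fin 3) (Fin 3)) p A := by
  intro h
  obtain ⟨n, s, hs, hn⟩ := h.exists_winding_numbers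
  have relation (i j k l : Fin 3) (hik : i ≠ k) (hjl : j ≠ l) :=
    hn (.inl i) (.inr j) (.inl k) (.inr l) (by simp) (by simp) (by simpa) (by simp) (by simp)
      (by simpa)
  have half (i j : Fin 3) := hs (.inl i) (.inr j) (by simp)
  have columns (i k : Fin 3) (hik : i ≠ k) := And.intro
    (And.intro (relation i 0 k 1 hik (by decide)) (relation i 1 k 0 hik (by decide))) <| And.intro
    (And.intro (relation i 0 k 2 hik (by decide)) (relation i 2 k 0 hik (by decide)))
    (And.intro (relation i 1 k 2 hik (by decide)) (relation i 2 k 1 hik (by decide)))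
  have := columns 0 1 (by decide)
  have := columns 0 2 (by decide)
  have := columns 1 2 (by decide)
  have := And.intro (half 1 0) <| And.intro (half 1 1) (half 1 2)
  have := And.intro (half 2 0) <| And.intro (half 2 1) (half 2 2)
  have := And.intro (half 0 0) <| And.intro (half 0 1) (half 0 2)
  have := hs (.inr 0) (.inr 1) (by simp)
  have := hs (.inr 0) (.inr 2) (by simp)
  have := hs (.inr 1) (.inr 2) (by simp)
  omega

/-- Every winding number occurs in exactly two of the fifteen relations between independent edges,
while their right-hand sides add up to an odd number. -/
theorem IsDrawing.not_top_five {p : Fin 5 → ℂ} {A : Sym2 (Fin 5) → Set ℂ} :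
    ¬IsDrawing (⊤ : SimpleGraph (Fin 5)) p A := by
  intro h
  obtain ⟨n, s, hs, hn⟩ := h.exists_winding_numbers
  have relation (a b c d : Fin 5) (hlt : a < b ∧ b < c ∧ c < d) :
      (n a c d + n d a b - n b c d - n c a b = s a c - s a d + s b d - s b c) ∧
      (n a b d + n d a c - n c b d - n b a c = s a b - s a d + s c d - (1 - s b c)) ∧
      (n a b c + n c a d - n d b c - n b a d = s a b - s a c + (1 - s c d) - (1 - s b d)) := by
    have := hs b c hlt.2.1.ne
    have := hs c d hlt.2.2.ne
    have := hs b d (hlt.2.1.trans hlt.2.2).ne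
    have := hn a b c d
    have := hn a c b d
    have := hn a d b c
    simp only [SimpleGraph.top_adj] at *
    grind
  have := relation 0 1 2 3 (by decide)
  have := relation 0 1 2 4 (by decide)
  have := relation 0 1 3 4 (by decide)
  have := relation 0 2 3 4 (by decide)
  have := relation 1 2 3 4 (by decide)
  omega

end WindingNumbers

end Drawing

section PlanarGraph

variable {V W : Type*}

/-- `x` and `y` are the ends of a walk in `G` that stays in the vertex set `A`. -/
def ReachableIn (G : SimpleGraph W) (A : Set W) (x y : W) : Prop :=
  ∃ w : G.Walk x y, ∀ v ∈ w.support, v ∈ A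

namespace ReachableIn

variable {G : SimpleGraph W} {A B : Set W} {x y z : W}

theorem of_adj (h : G.Adj x y) (hx : x ∈ A) (hy : y ∈ A) : ReachableIn G A x y :=
  ⟨h.toWalk, by simp [hx, hy]⟩

theorem trans (h : ReachableIn G A x y) (h' : ReachableIn G A y z) : ReachableIn G A x z := by
  obtain ⟨p, hp⟩ := h
  obtain ⟨q, hq⟩ := h'
  refine ⟨p.append q, fun v hv => ?_⟩
  rw [SimpleGraph.Walk.mem_support_append_iff] at hv
  exact hv.elim (hp v) (hq v)

theorem symm (h : ReachableIn G A x y) : ReachableIn G A y x := by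
  obtain ⟨p, hp⟩ := h
  exact ⟨p.reverse, fun v hv => hp v (by simpa using hv)⟩

theorem mono (h : ReachableIn G A x y) (hAB : A ⊆ B) : ReachableIn G B x y :=
  h.imp fun _ hp v hv => hAB (hp v hv)

theorem left_mem (h : ReachableIn G A x y) : x ∈ A :=
  let ⟨p, hp⟩ := h
  hp x p.start_mem_support

theorem right_mem (h : ReachableIn G A x y) : y ∈ A :=
  h.symm.left_mem

theorem exists_mem_or_compl (h : ReachableIn G A x y) (B : Set W) :
    (∃ z ∈ B, ReachableIn G A x z) ∨ ReachableIn G Bᶜ x y := by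
  classical
  obtain ⟨p, hp⟩ := h
  by_cases hB : ∃ z ∈ p.support, z ∈ B
  · obtain ⟨z, hz, hzB⟩ := hB
    exact Or.inl ⟨z, hzB, p.takeUntil z hz, fun v hv =>
      hp v (p.support_takeUntil_subset_support hz hv)⟩
  · exact Or.inr ⟨p, fun v hv hvB => hB ⟨v, hv, hvB⟩⟩

end ReachableIn

/-- The combinatorial counterpart of `IsDrawing`: the vertices of `H` are mapped to vertices of `G`
by `u`, and the ends of each edge `e` of `H` are mapped to the ends of a walk in the region `A e`,
where regions of edges without a common end are disjoint. A subdivision of `H` contained in `G`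
is an example. -/
structure IsWeakSubdivision (G : SimpleGraph W) (H : SimpleGraph V) (u : V → W)
    (A : Sym2 V → Set W) : Prop where
  injective : Function.Injective u
  reachableIn : ∀ {a b}, H.Adj a b → ReachableIn G (A s(a, b)) (u a) (u b)
  disjoint : ∀ {e f}, e ∈ H.edgeSet → f ∈ H.edgeSet → (∀ v ∈ e, v ∉ f) → Disjoint (A e) (A f)

theorem IsWeakSubdivision.of_detours {G : SimpleGraph W} {H : SimpleGraph V} {u : V → W}
    (hu : Function.Injective u) {B : Sym2 V → Set W} (hB : ∀ e c, u c ∈ B e → c ∈ e)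
    (hdisj : ∀ e f, e ≠ f → Disjoint (B e) (B f))
    (hreach : ∀ a b, H.Adj a b → ReachableIn G ({u a, u b} ∪ B s(a, b)) (u a) (u b)) :
    IsWeakSubdivision G H u fun e => u '' {v | v ∈ e} ∪ B e where
  injective := hu
  reachableIn {a b} hab := (hreach a b hab).mono <| Set.union_subset_union_left _ <| by
    rintro _ (rfl | rfl) <;> exact Set.mem_image_of_mem _ (by simp)
  disjoint {e f} _ _ hef := by
    have hne : e ≠ f := by
      rintro rfl
      exact hef _ e.out_fst_mem e.out_fst_mem
    rw [Set.disjoint_left]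
    rintro _ (⟨c, hc, rfl⟩ | hxe) (⟨d, hd, hdc⟩ | hxf)
    · exact hef c hc (hu hdc ▸ hd)
    · exact hef c hc (hB f c hxf)
    · exact hef d (hB e d (hdc ▸ hxe)) hd
    · exact Set.disjoint_left.1 (hdisj e f hne) hxe hxf

/-- Kuratowski's criterion for planarity, taken as the definition. -/
structure KuratowskiPlanar (G : SimpleGraph W) : Prop where
  not_k33 : ∀ u A, ¬IsWeakSubdivision G (completeBipartiteGraph (Fin 3) (Fin 3)) u A
  not_k5 : ∀ u A, ¬IsWeakSubdivision G (⊤ : SimpleGraph (Fin 5)) u A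

/-- `v 0, v 1, v 2, v 3` are the successive vertices of a cycle of length four, which may have
diagonals. -/
structure IsFourCycle (G : SimpleGraph W) (v : Fin 4 → W) : Prop where
  adj : ∀ i, G.Adj (v i) (v (i + 1))
  ne : ∀ i, v i ≠ v (i + 2)

theorem IsFourCycle.mk' {G : SimpleGraph W} {a b c d : W} (hab : G.Adj a b) (hbc : G.Adj b c)
    (hcd : G.Adj c d) (hda : G.Adj d a) (hac : a ≠ c) (hbd : b ≠ d) :
    IsFourCycle G ![a, b, c, d] where
  adj i := by fin_cases i <;> assumption
  ne i := by
    fin_cases i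
    exacts [hac, hbd, hac.symm, hbd.symm]

theorem IsFourCycle.rotate {G : SimpleGraph W} {v : Fin 4 → W} (hv : IsFourCycle G v) (i : Fin 4) :
    IsFourCycle G fun j => v (j + i) where
  adj j := by simpa only [add_right_comm] using hv.adj (j + i)
  ne j := by simpa only [add_right_comm] using hv.ne (j + i)

theorem IsFourCycle.injective {G : SimpleGraph W} {v : Fin 4 → W} (hv : IsFourCycle G v) :
    Function.Injective v := by
  have hne : ∀ i j : Fin 4, j = i + 1 ∨ j = i + 2 ∨ j + 1 = i → v i ≠ v j := by
    rintro i _ (rfl | rfl | rfl)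
    exacts [(hv.adj i).ne, hv.ne i, (hv.adj _).ne']
  have hcases : ∀ i j : Fin 4, i ≠ j → j = i + 1 ∨ j = i + 2 ∨ j + 1 = i := by decide
  exact fun i j hij => by_contra fun h => hne i j (hcases i j h) hij

namespace KuratowskiPlanar

variable {G : SimpleGraph W} {v : Fin 4 → W} {x z t t' w : W}

theorem not_reachableIn_of_k33 (hG : KuratowskiPlanar G) {a b : Fin 3 → W}
    (ha : Function.Injective a) (hb : Function.Injective b) (hab : a 2 ≠ b 2)
    (hadj : ∀ i j, (i, j) ≠ (2, 2) → G.Adj (a i) (b j)) {A : Set W} (haA : ∀ i, i ≠ 2 → a i ∉ A)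
    (hbA : ∀ i, i ≠ 2 → b i ∉ A) : ¬ReachableIn G A (a 2) (b 2) := by
  classical
  intro hA
  let u : Fin 3 ⊕ Fin 3 → W := Sum.elim a b
  let B : Sym2 (Fin 3 ⊕ Fin 3) → Set W := fun e => if e = s(.inl 2, .inr 2) then A else ∅
  have hreach : ∀ i j, ReachableIn G ({a i, b j} ∪ B s(.inl i, .inr j)) (a i) (b j) := by
    intro i j
    by_cases hij : (i, j) = (2, 2)
    · obtain ⟨rfl, rfl⟩ := Prod.mk.inj hij
      exact hA.mono fun w hw => Or.inr (by simpa [B] using hw)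
    · exact .of_adj (hadj i j hij) (by simp) (by simp)
  refine hG.not_k33 u _ (.of_detours (B := B) (ha.sumElim hb fun i j => ?_) ?_ ?_ ?_)
  · by_cases hij : (i, j) = (2, 2)
    · obtain ⟨rfl, rfl⟩ := Prod.mk.inj hij
      exact hab
    · exact (hadj i j hij).ne
  · intro e c hc
    by_cases he : e = s(.inl 2, .inr 2)
    · subst he
      rcases c with i | i
      · by_cases hi : i = 2
        · simp [hi]
        · exact (haA i hi (by simpa [u, B] using hc)).elim
      · by_cases hi : i = 2
        · simp [hi]
        · exact (hbA i hi (by simpa [u, B] using hc)).elim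
    · simp [B, he] at hc
  · intro e f hef
    by_cases he : e = s(.inl 2, .inr 2)
    · simp [B, he ▸ hef.symm]
    · simp [B, he]
  · rintro (i | i) (j | j) hij
    · simp at hij
    · exact hreach i j
    · rw [Set.pair_comm, Sym2.eq_swap]
      exact (hreach j i).symm
    · simp at hij

/-- Otherwise `{v 1, v 3, x}` and `{v 0, v 2, z}` are the two sides of a `K₃,₃`. -/
theorem eq_of_reachableIn_compl_fourCycle (hG : KuratowskiPlanar G) (hv : IsFourCycle G v)
    (hx0 : G.Adj x (v 0)) (hx2 : G.Adj x (v 2)) (hz1 : G.Adj z (v 1)) (hz3 : G.Adj z (v 3))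
    (hxz : ReachableIn G (Set.range v)ᶜ x z) : x = z := by
  by_contra hne
  have hx : ∀ i, v i ≠ x := fun i h => hxz.left_mem ⟨i, h⟩
  have hz : ∀ i, v i ≠ z := fun i h => hxz.right_mem ⟨i, h⟩
  have hside : ∀ {a b c : W}, a ≠ b → a ≠ c → b ≠ c → Function.Injective ![a, b, c] := by
    simp +contextual [Function.Injective, Fin.forall_fin_succ, eq_comm]
  have hcycle : ∀ i, ![v 1, v 3, x] i ≠ x → ![v 1, v 3, x] i ∉ (Set.range v)ᶜ := by
    simp [Fin.forall_fin_succ]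
  have hcycle' : ∀ i, ![v 0, v 2, z] i ≠ z → ![v 0, v 2, z] i ∉ (Set.range v)ᶜ := by
    simp [Fin.forall_fin_succ]
  have hinj := hside (hv.ne 1) (hx 1) (hx 3)
  have hinj' := hside (hv.ne 0) (hz 0) (hz 2)
  refine hG.not_reachableIn_of_k33 hinj hinj' hne ?_ (fun i hi => hcycle i (hinj.ne hi))
    (fun i hi => hcycle' i (hinj'.ne hi)) hxz
  intro i j hij
  fin_cases i <;> fin_cases j
  exacts [(hv.adj 0).symm, hv.adj 1, hz1.symm, hv.adj 3, (hv.adj 2).symm, hz3.symm, hx0, hx2,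
    absurd rfl hij]

theorem not_adj_of_fourCycle_commonNeighbors (hG : KuratowskiPlanar G) (hv : IsFourCycle G v)
    (hvt : ∀ i, v i ∈ G.commonNeighbors t t') : ¬G.Adj t t' := by
  intro htt
  have ht : t ∉ Set.range v := fun ⟨i, hi⟩ => (hvt i).1.ne hi.symm
  have ht' : t' ∉ Set.range v := fun ⟨i, hi⟩ => (hvt i).2.ne hi.symm
  exact htt.ne (hG.eq_of_reachableIn_compl_fourCycle hv (hvt 0).1 (hvt 2).1 (hvt 1).2 (hvt 3).2
    (.of_adj htt ht ht'))

theorem commonNeighbors_subset_fourCycle (hG : KuratowskiPlanar G) (hv : IsFourCycle G v)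
    (hvt : ∀ i, v i ∈ G.commonNeighbors t t') (htt : t ≠ t') :
    G.commonNeighbors t t' ⊆ Set.range v := by
  intro x hx
  by_contra hxv
  have ht : t ∉ Set.range v := fun ⟨i, hi⟩ => (hvt i).1.ne hi.symm
  have ht' : t' ∉ Set.range v := fun ⟨i, hi⟩ => (hvt i).2.ne hi.symm
  exact htt (hG.eq_of_reachableIn_compl_fourCycle hv (hvt 0).1 (hvt 2).1 (hvt 1).2 (hvt 3).2
    ((ReachableIn.of_adj hx.1 ht hxv).trans (.of_adj hx.2.symm hxv ht')))

/-- Together with `v 0`, `v 1` and `v 2` these would span a `K₃,₃`. -/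
theorem eq_or_eq_of_fourCycle_commonNeighbors (hG : KuratowskiPlanar G) (hv : IsFourCycle G v)
    (hvt : ∀ i, v i ∈ G.commonNeighbors t t') (htt : t ≠ t') (hw : ∀ i, G.Adj w (v i)) :
    w = t ∨ w = t' := by
  by_contra! hne
  have hcycle : IsFourCycle G ![v 0, t, v 1, t'] :=
    .mk' (hvt 0).1.symm (hvt 1).1 (hvt 1).2.symm (hvt 0).2 (hv.adj 0).ne htt
  refine (hw 2).ne (hG.eq_of_reachableIn_compl_fourCycle hcycle (hw 0) (hw 1) (hvt 2).1.symm
    (hvt 2).2.symm (.of_adj (hw 2) ?_ ?_))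
  · simp [hne, (hw 0).ne, (hw 1).ne]
  · have h20 : v 2 ≠ v 0 := (hv.ne 0).symm
    have h21 : v 2 ≠ v 1 := (hv.adj 1).ne'
    simp [h20, h21, (hvt 2).1.ne', (hvt 2).2.ne']

/-- Otherwise `w, v 0, v 1, v 2, v 3` are the vertices of a `K₅` with the two edges `v 0 v 2` and
`v 1 v 3` subdivided by `x` and `z`. -/
theorem eq_of_adj_compl_fourCycle (hG : KuratowskiPlanar G) (hv : IsFourCycle G v)
    (hx0 : G.Adj x (v 0)) (hx2 : G.Adj x (v 2)) (hz1 : G.Adj z (v 1)) (hz3 : G.Adj z (v 3))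
    (hw : ∀ i, G.Adj w (v i)) (hxw : x ≠ w) (hzw : z ≠ w) (hx : x ∉ Set.range v)
    (hz : z ∉ Set.range v) : x = z := by
  classical
  by_contra hne
  let u : Fin 5 → W := Fin.cons w v
  let B : Sym2 (Fin 5) → Set W :=
    fun e => if e = s(1, 3) then {x} else if e = s(2, 4) then {z} else ∅
  have hrim : ∀ {i j}, G.Adj (v i) (v j) →
      ReachableIn G ({v i, v j} ∪ B s(i.succ, j.succ)) (v i) (v j) :=
    fun h => .of_adj h (by simp) (by simp)
  have hspoke : ∀ i, ReachableIn G ({w, v i} ∪ B s(0, i.succ)) w (v i) :=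
    fun i => .of_adj (hw i) (by simp) (by simp)
  have hdiag0 : ReachableIn G ({v 0, v 2} ∪ B s(1, 3)) (v 0) (v 2) :=
    (ReachableIn.of_adj hx0.symm (by simp) (by simp [B])).trans
      (.of_adj hx2 (by simp [B]) (by simp))
  have hdiag1 : ReachableIn G ({v 1, v 3} ∪ B s(2, 4)) (v 1) (v 3) :=
    (ReachableIn.of_adj hz1.symm (by simp) (by simp [B])).trans
      (.of_adj hz3 (by simp [B]) (by simp))
  have hreach : ∀ a b : Fin 5, a < b → ReachableIn G ({u a, u b} ∪ B s(a, b)) (u a) (u b) := by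
    intro a b hab
    fin_cases a <;> fin_cases b <;> simp at hab
    exacts [hspoke 0, hspoke 1, hspoke 2, hspoke 3, hrim (hv.adj 0), hdiag0, hrim (hv.adj 3).symm,
      hrim (hv.adj 1), hdiag1, hrim (hv.adj 2)]
  refine hG.not_k5 u _ (.of_detours (B := B) ?_ ?_ ?_ ?_)
  · exact Fin.cons_injective_iff.2 ⟨fun ⟨i, hi⟩ => (hw i).ne hi.symm, hv.injective⟩
  · intro e c hc
    have huc : u c ≠ x ∧ u c ≠ z := by
      cases c using Fin.cases with
      | zero => exact ⟨hxw.symm, hzw.symm⟩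
      | succ i => exact ⟨fun h => hx ⟨i, h⟩, fun h => hz ⟨i, h⟩⟩
    simp only [B] at hc
    split_ifs at hc
    exacts [(huc.1 hc).elim, (huc.2 hc).elim, hc.elim]
  · intro e f hef
    simp only [B]
    split_ifs with he he' he' <;> simp_all [Ne.symm hne]
  · intro a b hab
    rcases lt_or_gt_of_ne hab with hlt | hlt
    · exact hreach a b hlt
    · rw [Set.pair_comm, Sym2.eq_swap]
      exact (hreach b a hlt).symm

end KuratowskiPlanar

end PlanarGraph

section Topology

open Module

variable {X : Type*} [TopologicalSpace X]

theorem isPreconnected_sphere_compl_of_countable {F : Type*} [NormedAddCommGroup F]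
    [InnerProductSpace ℝ F] {n : ℕ} [Fact (finrank ℝ F = n + 1)] (hn : 1 < n)
    {C : Set (Metric.sphere (0 : F) 1)} (hC : C.Countable) : IsPreconnected Cᶜ := by
  have hF : finrank ℝ F = n + 1 := Fact.out
  have := FiniteDimensional.of_finrank_eq_succ hF
  rcases C.eq_empty_or_nonempty with rfl | ⟨p, hp⟩
  · have hrank : 1 < Module.rank ℝ F := by
      rw [← finrank_eq_rank, hF]
      exact_mod_cast hn.trans n.lt_succ_self
    rw [Set.compl_empty]
    exact (isPreconnected_iff_preconnectedSpace.1
      (isConnected_sphere hrank 0 zero_le_one).isPreconnected).isPreconnected_univ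
  · let σ := (stereographic' n p).symm
    have hsource : σ.source = Set.univ := stereographic'_target p
    have htarget : σ.target = {p}ᶜ := stereographic'_source p
    have hinj : Function.Injective σ := Set.injOn_univ.1 (hsource ▸ σ.injOn)
    have himage : σ '' (σ ⁻¹' C)ᶜ = Cᶜ := by
      rw [← Set.preimage_compl, Set.image_preimage_eq_inter_range, ← Set.image_univ, ← hsource,
        σ.image_source_eq_target, htarget, Set.inter_eq_left]
      exact Set.compl_subset_compl.2 (Set.singleton_subset_iff.2 hp)
    have hrank : 1 < Module.rank ℝ (EuclideanSpace ℝ (Fin n)) := by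
      rw [← finrank_eq_rank, finrank_euclideanSpace_fin]
      exact_mod_cast hn
    rw [← himage]
    exact ((hC.preimage_of_injOn hinj.injOn).isConnected_compl_of_one_lt_rank
      hrank).isPreconnected.image _ (σ.continuousOn.mono (hsource ▸ Set.subset_univ _))

instance : Fact (finrank ℝ E3 = 2 + 1) := ⟨by simp⟩

theorem isPreconnected_sdiff_of_homeomorph_sphere {S C : Set X}
    (h : S ≃ₜ Metric.sphere (0 : E3) 1) (hC : C.Countable) : IsPreconnected (S \ C) := by
  have hinj : Function.Injective fun z => (h.symm z : X) :=
    Subtype.val_injective.comp h.symm.injective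
  have himage : (fun z => (h.symm z : X)) '' ((fun z => (h.symm z : X)) ⁻¹' C)ᶜ = S \ C := by
    have hrange : Set.range (fun z => (h.symm z : X)) = S :=
      (h.symm.surjective.range_comp Subtype.val).trans Subtype.range_val
    rw [← Set.preimage_compl, Set.image_preimage_eq_inter_range, hrange, Set.inter_comm,
      Set.sdiff_eq]
  rw [← himage]
  exact (isPreconnected_sphere_compl_of_countable one_lt_two
    (hC.preimage_of_injOn hinj.injOn)).image _ (by fun_prop)

theorem exists_injOn_complex_of_homeomorph_sphere {S : Set X}
    (h : S ≃ₜ Metric.sphere (0 : E3) 1) {x : X} (hx : x ∈ S) :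
    ∃ φ : X → ℂ, ContinuousOn φ (S \ {x}) ∧ (S \ {x}).InjOn φ := by
  classical
  let σ := stereographic' 2 (h ⟨x, hx⟩)
  let e := Complex.orthonormalBasisOneI.repr.symm
  have hσ : ∀ z : ↥(S \ {x}), h ⟨z, z.2.1⟩ ∈ σ.source := fun z => by
    rw [stereographic'_source, Set.mem_compl_singleton_iff, h.injective.ne_iff]
    exact fun hz => z.2.2 (congrArg Subtype.val hz)
  refine ⟨fun z => if hz : z ∈ S then e (σ (h ⟨z, hz⟩)) else 0, ?_, fun y hy z hz hyz => ?_⟩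
  · rw [continuousOn_iff_continuous_domRestrict]
    have hcont : Continuous fun z : ↥(S \ {x}) => e (σ (h ⟨z, z.2.1⟩)) :=
      e.continuous.comp (σ.continuousOn.comp_continuous (by fun_prop) hσ)
    exact hcont.congr fun z => by simp [z.2.1]
  · simp only [hy.1, hz.1, dif_pos] at hyz
    exact congrArg Subtype.val
      (h.injective (σ.injOn (hσ ⟨y, hy⟩) (hσ ⟨z, hz⟩) (e.injective hyz)))

/-- The middle third of the arc is cut off by the two points removed. -/
theorem not_isPreconnected_union_arc_sdiff [T2Space X] {K : Set X} (hK : IsClosed K) {f : ℝ → X}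
    (hf : Continuous f) (hinj : (Set.Icc 0 1).InjOn f) (hfK : ∀ t ∈ Set.Ioo 0 1, f t ∉ K) :
    ¬IsPreconnected ((K ∪ f '' Set.Icc 0 1) \ {f (1 / 3), f (2 / 3)}) := by
  intro hconn
  have hclosed : ∀ a b, IsClosed (f '' Set.Icc a b) := fun a b =>
    (isCompact_Icc.image hf).isClosed
  have hsub : ∀ t ∈ Set.Icc (1 / 3 : ℝ) (2 / 3), t ∈ Set.Ioo (0 : ℝ) 1 := fun t ht =>
    ⟨by linarith [ht.1], by linarith [ht.2]⟩
  have hmem : ∀ t ∈ Set.Icc (0 : ℝ) 1, t ≠ 1 / 3 → t ≠ 2 / 3 →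
      f t ∈ (K ∪ f '' Set.Icc 0 1) \ {f (1 / 3), f (2 / 3)} := by
    rintro t ht h1 h2
    refine ⟨.inr ⟨t, ht, rfl⟩, ?_⟩
    rintro (h | h)
    exacts [h1 (hinj ht (by norm_num) h), h2 (hinj ht (by norm_num) h)]
  have hcover : (K ∪ f '' Set.Icc 0 1) \ {f (1 / 3), f (2 / 3)} ⊆
      f '' Set.Icc (1 / 3) (2 / 3) ∪ (K ∪ (f '' Set.Icc 0 (1 / 3) ∪ f '' Set.Icc (2 / 3) 1)) := by
    rintro _ ⟨hz | ⟨t, ht, rfl⟩, -⟩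
    · exact .inr (.inl hz)
    rcases le_total t (1 / 3) with h1 | h1
    · exact .inr (.inr (.inl ⟨t, ⟨ht.1, h1⟩, rfl⟩))
    rcases le_total t (2 / 3) with h2 | h2
    · exact .inl ⟨t, ⟨h1, h2⟩, rfl⟩
    · exact .inr (.inr (.inr ⟨t, ⟨h2, ht.2⟩, rfl⟩))
  obtain ⟨_, ⟨-, hz⟩, ⟨t, ht, rfl⟩, htK | ⟨s, hs, hst⟩ | ⟨s, hs, hst⟩⟩ :=
    isPreconnected_closed_iff.1 hconn _ _ (hclosed _ _)
      (hK.union ((hclosed _ _).union (hclosed _ _))) hcover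
      ⟨f (1 / 2), hmem _ (by norm_num) (by norm_num) (by norm_num), 1 / 2, by norm_num, rfl⟩
      ⟨f 0, hmem _ (by norm_num) (by norm_num) (by norm_num), .inr (.inl ⟨0, by norm_num, rfl⟩)⟩
  · exact hfK t (hsub t ht) htK
  · obtain rfl : s = t := hinj ⟨hs.1, by linarith [hs.2]⟩ (Set.Ioo_subset_Icc_self (hsub t ht)) hst
    exact hz (.inl (congrArg f (le_antisymm hs.2 ht.1)))
  · obtain rfl : s = t := hinj ⟨by linarith [hs.1], hs.2⟩ (Set.Ioo_subset_Icc_self (hsub t ht)) hst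
    exact hz (.inr (congrArg f (le_antisymm ht.2 hs.1)))

end Topology

section OneSkeleton

variable {V E : Type*} [AddCommGroup E] [Module ℝ E]

/-- The 1-skeleton of `L` as a graph on the ambient space. Points which are not vertices of `L` are
isolated. -/
def oneSkeleton [DecidableEq E] (L : SimplicialComplex ℝ E) : SimpleGraph E where
  Adj p q := p ≠ q ∧ {p, q} ∈ L.faces
  symm := ⟨fun p q h => ⟨h.1.symm, Finset.pair_comm p q ▸ h.2⟩⟩
  loopless := ⟨fun _ h => h.1 rfl⟩

/-- The union of the vertices and edges of `L` all of whose vertices lie in `A`. -/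
def oneSkeletonSpace (L : SimplicialComplex ℝ E) (A : Set E) : Set E :=
  {p | ∃ F ∈ L.faces, F.card ≤ 2 ∧ (F : Set E) ⊆ A ∧ p ∈ convexHull ℝ (F : Set E)}

theorem oneSkeletonSpace_mono (L : SimplicialComplex ℝ E) {A B : Set E} (hAB : A ⊆ B) :
    oneSkeletonSpace L A ⊆ oneSkeletonSpace L B :=
  fun _ ⟨F, hF, hcard, hFA, hp⟩ => ⟨F, hF, hcard, hFA.trans hAB, hp⟩

theorem oneSkeletonSpace_subset_space (L : SimplicialComplex ℝ E) (A : Set E) :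
    oneSkeletonSpace L A ⊆ L.space :=
  fun _ ⟨_, hF, _, _, hp⟩ => L.convexHull_subset_space hF hp

theorem disjoint_oneSkeletonSpace (L : SimplicialComplex ℝ E) {A B : Set E} (hAB : Disjoint A B) :
    Disjoint (oneSkeletonSpace L A) (oneSkeletonSpace L B) := by
  rw [Set.disjoint_left]
  rintro p ⟨F, hF, -, hFA, hpF⟩ ⟨G, hG, -, hGB, hpG⟩
  have hp := L.inter_subset_convexHull hF hG ⟨hpF, hpG⟩
  rwa [(hAB.mono hFA hGB).inter_eq, convexHull_empty] at hp

variable [DecidableEq E] {L : SimplicialComplex ℝ E} {A : Set E} {x y : E}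

theorem mem_oneSkeletonSpace_of_adj (h : (oneSkeleton L).Adj x y) (hx : x ∈ A) :
    x ∈ oneSkeletonSpace L A :=
  ⟨{x}, L.down_closed h.2 (by simp) (by simp), by simp, by simpa using hx, by simp⟩

theorem lineMap_notMem_convexHull_of_adj (h : (oneSkeleton L).Adj x y) {G : Finset E}
    (hG : G ∈ L.faces) (hcard : G.card ≤ 2) (hne : G ≠ {x, y}) {t : ℝ} (ht : t ∈ Set.Ioo 0 1) :
    AffineMap.lineMap x y t ∉ convexHull ℝ (G : Set E) := by
  intro htG
  have hcommon : AffineMap.lineMap x y t ∈ convexHull ℝ (({x, y} ∩ G : Finset E) : Set E) := by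
    rw [Finset.coe_inter]
    refine L.inter_subset_convexHull h.2 hG ⟨?_, htG⟩
    rw [Finset.coe_pair, convexHull_pair, segment_eq_image_lineMap]
    exact ⟨t, Set.Ioo_subset_Icc_self ht, rfl⟩
  have hmem : ∀ {z}, {x, y} ∩ G ⊆ {z} → AffineMap.lineMap x y t = z := fun {z} hz => by
    simpa using convexHull_mono (𝕜 := ℝ) (Finset.coe_subset.2 hz) hcommon
  by_cases hx : x ∈ G
  · have hy : y ∉ G := fun hy => hne <| .symm <| Finset.eq_of_subset_of_card_le
      (by simp [Finset.insert_subset_iff, hx, hy]) (hcard.trans_eq (Finset.card_pair h.1).symm)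
    refine ht.1.ne' (AffineMap.lineMap_injective ℝ h.1 ?_)
    rw [hmem (z := x) (by simp [Finset.insert_inter_of_mem, hx, hy]), AffineMap.lineMap_apply_zero]
  · refine ht.2.ne (AffineMap.lineMap_injective ℝ h.1 ?_)
    rw [hmem (z := y), AffineMap.lineMap_apply_one]
    rw [Finset.insert_inter_of_notMem hx]
    exact Finset.inter_subset_left

variable [TopologicalSpace E] [IsTopologicalAddGroup E] [ContinuousSMul ℝ E]

theorem joinedIn_oneSkeletonSpace_of_adj (h : (oneSkeleton L).Adj x y) (hx : x ∈ A) (hy : y ∈ A) :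
    JoinedIn (oneSkeletonSpace L A) x y := by
  have hmem : ∀ {z}, z ∈ ({x, y} : Finset E) → z ∈ convexHull ℝ (({x, y} : Finset E) : Set E) :=
    fun hz => subset_convexHull ℝ _ (Finset.mem_coe.2 hz)
  have hpath := (convex_convexHull ℝ (({x, y} : Finset E) : Set E)).isPathConnected
    ⟨x, hmem (by simp)⟩
  refine (hpath.joinedIn x (hmem (by simp)) y (hmem (by simp))).mono fun z hz =>
    ⟨{x, y}, h.2, Finset.card_le_two, ?_, hz⟩
  simp [Set.insert_subset_iff, hx, hy]

theorem ReachableIn.joinedIn_oneSkeletonSpace (h : ReachableIn (oneSkeleton L) A x y)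
    (hxy : x ≠ y) : JoinedIn (oneSkeletonSpace L A) x y := by
  obtain ⟨p, hp⟩ := h
  induction p with
  | nil => exact (hxy rfl).elim
  | @cons x z y hxz p ih =>
    simp only [SimpleGraph.Walk.support_cons, List.mem_cons, forall_eq_or_imp] at hp
    have hjoin := joinedIn_oneSkeletonSpace_of_adj hxz hp.1 (hp.2 z p.start_mem_support)
    by_cases hzy : z = y
    · exact hzy ▸ hjoin
    · exact hjoin.trans (ih hzy hp.2)

theorem IsWeakSubdivision.isDrawing {H : SimpleGraph V} {u : V → E} {A : Sym2 V → Set E}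
    (h : IsWeakSubdivision (oneSkeleton L) H u A) :
    IsDrawing H u fun e => oneSkeletonSpace L (A e) where
  injective := h.injective
  joinedIn hab := (h.reachableIn hab).joinedIn_oneSkeletonSpace (h.injective.ne hab.ne)
  disjoint he hf hef := disjoint_oneSkeletonSpace L (h.disjoint he hf hef)

variable [T2Space E]

/-- A sphere is not a finite graph, since it is not disconnected by two points in an edge. -/
theorem exists_mem_space_notMem_oneSkeletonSpace (hfin : L.faces.Finite)
    (h : L.space ≃ₜ Metric.sphere (0 : E3) 1) (hxy : (oneSkeleton L).Adj x y) :
    ∃ p ∈ L.space, p ∉ oneSkeletonSpace L Set.univ := by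
  by_contra! hall
  let f : ℝ → E := AffineMap.lineMap x y
  let K := ⋃ G ∈ {G ∈ L.faces | G.card ≤ 2 ∧ G ≠ {x, y}}, convexHull ℝ (G : Set E)
  have hf : f '' Set.Icc 0 1 = convexHull ℝ (({x, y} : Finset E) : Set E) := by
    rw [Finset.coe_pair, convexHull_pair, segment_eq_image_lineMap]
  have hK : IsClosed K := (hfin.subset (Set.sep_subset _ _)).isClosed_biUnion fun G _ =>
    (G.finite_toSet.isCompact_convexHull ℝ).isClosed
  have hfK : ∀ t ∈ Set.Ioo 0 1, f t ∉ K := fun t ht htK => by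
    obtain ⟨G, ⟨hG, hcard, hne⟩, htG⟩ := Set.mem_iUnion₂.1 htK
    exact lineMap_notMem_convexHull_of_adj hxy hG hcard hne ht htG
  have hspace : L.space = K ∪ f '' Set.Icc 0 1 := by
    refine subset_antisymm (fun p hp => ?_) (Set.union_subset (Set.iUnion₂_subset fun G hG =>
      L.convexHull_subset_space hG.1) (hf ▸ L.convexHull_subset_space hxy.2))
    obtain ⟨G, hG, hcard, -, hpG⟩ := hall p hp
    by_cases hne : G = {x, y}
    · exact .inr (hf ▸ hne ▸ hpG)
    · exact .inl (Set.mem_iUnion₂.2 ⟨G, ⟨hG, hcard, hne⟩, hpG⟩)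
  refine not_isPreconnected_union_arc_sdiff hK AffineMap.lineMap_continuous
    (AffineMap.lineMap_injective ℝ hxy.1).injOn hfK ?_
  rw [← hspace]
  exact isPreconnected_sdiff_of_homeomorph_sphere h (Set.toFinite _).countable

theorem IsWeakSubdivision.exists_isDrawing_complex [Nonempty V] {H : SimpleGraph V} {u : V → E}
    {A : Sym2 V → Set E} (hu : IsWeakSubdivision (oneSkeleton L) H u A) (hfin : L.faces.Finite)
    (h : L.space ≃ₜ Metric.sphere (0 : E3) 1) (hH : ∀ a, ∃ b, H.Adj a b) :
    ∃ (p : V → ℂ) (B : Sym2 V → Set ℂ), IsDrawing H p B := by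
  have hedge : ∀ a, ∃ b, (oneSkeleton L).Adj (u a) b := fun a => by
    obtain ⟨b, hab⟩ := hH a
    obtain ⟨w, -⟩ := hu.reachableIn hab
    exact ⟨_, w.adj_snd (SimpleGraph.Walk.not_nil_of_ne (hu.injective.ne hab.ne))⟩
  obtain ⟨a⟩ := ‹Nonempty V›
  obtain ⟨x, hx⟩ := hedge a
  obtain ⟨p, hp, hpS⟩ := exists_mem_space_notMem_oneSkeletonSpace hfin h hx
  obtain ⟨φ, hφ, hinj⟩ := exists_injOn_complex_of_homeomorph_sphere h hp
  have hS : oneSkeletonSpace L Set.univ ⊆ L.space \ {p} :=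
    Set.subset_sdiff_singleton (oneSkeletonSpace_subset_space L _) hpS
  exact ⟨_, _, hu.isDrawing.image
    (fun a => (hedge a).elim fun _ hb => mem_oneSkeletonSpace_of_adj hb (Set.mem_univ _))
    (fun e _ => oneSkeletonSpace_mono L (Set.subset_univ _)) (hφ.mono hS) (hinj.mono hS)⟩

theorem kuratowskiPlanar_oneSkeleton (hfin : L.faces.Finite)
    (h : L.space ≃ₜ Metric.sphere (0 : E3) 1) : KuratowskiPlanar (oneSkeleton L) where
  not_k33 u A hu := by
    obtain ⟨p, B, hp⟩ := hu.exists_isDrawing_complex hfin h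
      (Sum.forall.2 ⟨fun _ => ⟨.inr 0, by simp⟩, fun _ => ⟨.inl 0, by simp⟩⟩)
    exact hp.not_completeBipartiteGraph_three_three
  not_k5 u A hu := by
    obtain ⟨p, B, hp⟩ := hu.exists_isDrawing_complex hfin h fun a => ⟨a + 1, by simp⟩
    exact hp.not_top_five

end OneSkeleton

section Suspension

open scoped Finset

/-- The graph of the edges of `L` with label `2`. -/
def rightAngledGraph (L : SimplicialComplex ℝ E3) (m : E3 → E3 → ℕ) : SimpleGraph E3 where
  Adj p q := (oneSkeleton L).Adj p q ∧ m p q = 2 ∧ m q p = 2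
  symm := ⟨fun _ _ h => ⟨h.1.symm, h.2.2, h.2.1⟩⟩
  loopless := ⟨fun _ h => h.1.ne rfl⟩

/-- The part of metric flagness that concerns triangles with two edges labeled `2`: they always
bound a 2-simplex. -/
def RightAngledFlag (L : SimplicialComplex ℝ E3) (m : E3 → E3 → ℕ) : Prop :=
  ∀ ⦃t p q⦄, (rightAngledGraph L m).Adj t p → (rightAngledGraph L m).Adj t q →
    (oneSkeleton L).Adj p q → ({t, p, q} : Finset E3) ∈ L.faces

/-- The largest base of a right-angled suspension in `L` with suspension points `t, t'`. -/
def suspensionBase (L : SimplicialComplex ℝ E3) (m : E3 → E3 → ℕ) (t t' : E3) :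
    Set (Finset E3) :=
  {F | F ∈ L.faces ∧ insert t F ∈ L.faces ∧ insert t' F ∈ L.faces ∧
    ∀ v ∈ F, v ∈ (rightAngledGraph L m).commonNeighbors t t'}

/-- The largest right-angled suspension in `L` with suspension points `t, t'`. -/
def suspension (L : SimplicialComplex ℝ E3) (m : E3 → E3 → ℕ) (t t' : E3) : Set (Finset E3) :=
  joinSusp (suspensionBase L m t t') t t'

/-- The vertices of a subcomplex. -/
def vertexSet (T : Set (Finset E3)) : Set E3 :=
  {v | {v} ∈ T}

variable {L : SimplicialComplex ℝ E3} {m : E3 → E3 → ℕ} {T T' : Set (Finset E3)}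
  {F G : Finset E3} {t t' x y : E3}

theorem commonNeighbors_rightAngledGraph_subset :
    (rightAngledGraph L m).commonNeighbors t t' ⊆ (oneSkeleton L).commonNeighbors t t' :=
  fun _ h => ⟨h.1.1, h.2.1⟩

theorem MetricFlag.rightAngledFlag (hf : MetricFlag L m)
    (hpos : ∀ s t, (oneSkeleton L).Adj s t → 0 < m s t) : RightAngledFlag L m := by
  intro t p q htp htq hpq
  rw [hf t p q htp.1.ne hpq.ne htq.1.ne htp.1.2 hpq.2 htq.1.2, htp.2.1, htq.2.2]
  have : 0 < 1 / (m p q : ℝ) := one_div_pos.2 (Nat.cast_pos.2 (hpos p q hpq))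
  push_cast
  linarith

theorem adj_of_mem_face (hF : F ∈ L.faces) (hx : x ∈ F) (hy : y ∈ F) (hxy : x ≠ y) :
    (oneSkeleton L).Adj x y :=
  ⟨hxy, L.down_closed hF (Finset.insert_subset hx (Finset.singleton_subset_iff.2 hy))
    (Finset.insert_nonempty _ _)⟩

theorem RightAngledFlag.insert_mem_faces (hf : RightAngledFlag L m) (hF : F ∈ L.faces)
    (hcard : #F ≤ 2) (ht : ∀ v ∈ F, (rightAngledGraph L m).Adj t v) : insert t F ∈ L.faces := by
  have hpos : 0 < #F := Finset.card_pos.2 (L.nonempty_of_mem_faces hF)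
  obtain hone | htwo : #F = 1 ∨ #F = 2 := by omega
  · obtain ⟨p, rfl⟩ := Finset.card_eq_one.1 hone
    exact (ht p (Finset.mem_singleton_self p)).1.2
  · obtain ⟨p, q, hpq, rfl⟩ := Finset.card_eq_two.1 htwo
    exact hf (ht p (by simp)) (ht q (by simp)) ⟨hpq, hF⟩

theorem suspension_comm (t t' : E3) : suspension L m t t' = suspension L m t' t := by
  have hbase : suspensionBase L m t t' = suspensionBase L m t' t := by
    ext F
    simp only [suspensionBase, SimpleGraph.commonNeighbors_symm _ t t', Set.mem_ofPred_eq]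
    tauto
  rw [suspension, suspension, joinSusp, joinSusp, hbase, Set.pair_comm, Set.union_right_comm]

theorem mem_or_insert_of_mem_joinSusp {Z : Set (Finset E3)} (hF : F ∈ joinSusp Z t t') :
    ∃ G, (G ∈ Z ∨ G = ∅) ∧ (F = insert t G ∨ F = insert t' G ∨ G ∈ Z ∧ F = G) := by
  obtain ((hF | rfl | rfl) | ⟨G, hG, rfl⟩) | ⟨G, hG, rfl⟩ := hF
  exacts [⟨F, .inl hF, by tauto⟩, ⟨∅, by simp⟩, ⟨∅, by simp⟩, ⟨G, by tauto⟩, ⟨G, by tauto⟩]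

theorem eq_or_mem_commonNeighbors_of_mem_suspension (hF : F ∈ suspension L m t t') (hx : x ∈ F) :
    x = t ∨ x = t' ∨ x ∈ (rightAngledGraph L m).commonNeighbors t t' := by
  obtain ⟨G, hG, hFG⟩ := mem_or_insert_of_mem_joinSusp hF
  have hGW : ∀ v ∈ G, v ∈ (rightAngledGraph L m).commonNeighbors t t' := by
    obtain hG | rfl := hG
    exacts [hG.2.2.2, by simp]
  obtain rfl | rfl | ⟨-, rfl⟩ := hFG
  · exact (Finset.mem_insert.1 hx).imp_right fun h => .inr (hGW x h)
  · exact .inr ((Finset.mem_insert.1 hx).imp_right (hGW x))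
  · exact .inr (.inr (hGW x hx))

theorem mem_vertexSet_suspension : x ∈ vertexSet (suspension L m t t') ↔
    x = t ∨ x = t' ∨ x ∈ (rightAngledGraph L m).commonNeighbors t t' := by
  refine ⟨fun h => eq_or_mem_commonNeighbors_of_mem_suspension h (Finset.mem_singleton_self x), ?_⟩
  rintro (rfl | rfl | hx)
  · exact .inl (.inl (.inr (.inl rfl)))
  · exact .inl (.inl (.inr (.inr rfl)))
  · refine .inl (.inl (.inl ⟨?_, hx.1.1.2, hx.2.1.2, fun v hv => ?_⟩))
    · exact L.down_closed hx.1.1.2 (by simp) (Finset.singleton_nonempty x)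
    · rwa [Finset.mem_singleton.1 hv]

theorem mem_vertexSet_of_mem_suspension (hF : F ∈ suspension L m t t') (hx : x ∈ F) :
    x ∈ vertexSet (suspension L m t t') :=
  mem_vertexSet_suspension.2 (eq_or_mem_commonNeighbors_of_mem_suspension hF hx)

theorem mem_suspensionBase_of_card_le_two (hf : RightAngledFlag L m) (hF : F ∈ L.faces)
    (hcard : #F ≤ 2) (hFW : ∀ v ∈ F, v ∈ (rightAngledGraph L m).commonNeighbors t t') :
    F ∈ suspensionBase L m t t' :=
  ⟨hF, hf.insert_mem_faces hF hcard fun v hv => (hFW v hv).1,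
    hf.insert_mem_faces hF hcard fun v hv => (hFW v hv).2, hFW⟩

theorem mem_suspension_of_card_sdiff_le_two (hf : RightAngledFlag L m)
    (htt : ¬(oneSkeleton L).Adj t t') (hF : F ∈ L.faces)
    (hFv : ∀ v ∈ F, v ∈ vertexSet (suspension L m t t')) (hcard : #(F \ {t, t'}) ≤ 2) :
    F ∈ suspension L m t t' := by
  have hbase : F \ {t, t'} ∈ suspensionBase L m t t' ∨ F \ {t, t'} = ∅ := by
    refine (Finset.eq_empty_or_nonempty (F \ {t, t'})).symm.imp_left fun hne => ?_
    refine mem_suspensionBase_of_card_le_two hf (L.down_closed hF Finset.sdiff_subset hne) hcard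
      fun v hv => ?_
    have := mem_vertexSet_suspension.1 (hFv v (Finset.mem_sdiff.1 hv).1)
    simp only [Finset.mem_sdiff, Finset.mem_insert, Finset.mem_singleton] at hv
    tauto
  have hapex : ∀ {s s'}, ¬(oneSkeleton L).Adj s s' → s ∈ F → insert s (F \ {s, s'}) = F := by
    intro s s' hss hs
    ext v
    simp only [Finset.mem_insert, Finset.mem_sdiff, Finset.mem_singleton]
    have : v ∈ F → v = s' → v = s := fun hv hvs => by_contra fun h =>
      hss (adj_of_mem_face hF hs (hvs ▸ hv) (hvs ▸ Ne.symm h))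
    constructor
    · rintro (rfl | h)
      exacts [hs, h.1]
    · tauto
  by_cases ht : t ∈ F
  · rw [← hapex htt ht]
    obtain hG | hG := hbase
    exacts [.inl (.inr ⟨_, hG, rfl⟩), hG ▸ .inl (.inl (.inr (.inl rfl)))]
  by_cases ht' : t' ∈ F
  · rw [← hapex (fun h => htt h.symm) ht', Finset.pair_comm]
    obtain hG | hG := hbase
    exacts [.inr ⟨_, hG, rfl⟩, hG ▸ .inl (.inl (.inr (.inr rfl)))]
  · have hsdiff : F \ {t, t'} = F := Finset.sdiff_eq_self_of_disjoint (by simp [ht, ht'])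
    rw [hsdiff] at hbase
    exact .inl (.inl (.inl (hbase.resolve_right (L.nonempty_of_mem_faces hF).ne_empty)))

theorem edge_mem_suspension (hf : RightAngledFlag L m) (htt : ¬(oneSkeleton L).Adj t t')
    (hxy : (oneSkeleton L).Adj x y) (hx : x ∈ vertexSet (suspension L m t t'))
    (hy : y ∈ vertexSet (suspension L m t t')) : {x, y} ∈ suspension L m t t' :=
  mem_suspension_of_card_sdiff_le_two hf htt hxy.2 (by simp [hx, hy])
    ((Finset.card_le_card Finset.sdiff_subset).trans Finset.card_le_two)

theorem commonNeighbors_or_suspension_eq_of_not_adj (hxy : x ≠ y) (hn : ¬(oneSkeleton L).Adj x y)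
    (hx : x ∈ vertexSet (suspension L m t t')) (hy : y ∈ vertexSet (suspension L m t t')) :
    x ∈ (rightAngledGraph L m).commonNeighbors t t' ∨
      suspension L m t t' = suspension L m x y := by
  have hn' : ¬(oneSkeleton L).Adj y x := fun h => hn h.symm
  rw [mem_vertexSet_suspension] at hx hy
  obtain rfl | rfl | hx := hx
  · obtain rfl | rfl | hy := hy
    exacts [absurd rfl hxy, .inr rfl, absurd hy.1.1 hn]
  · obtain rfl | rfl | hy := hy
    exacts [.inr (suspension_comm _ _), absurd rfl hxy, absurd hy.2.1 hn]
  · exact .inl hx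

theorem IsRASuspData.subset_suspensionBase {Z : Set (Finset E3)} (h : IsRASuspData L m T Z t t')
    (hm : ∀ s t, m s t = m t s) : Z ⊆ suspensionBase L m t t' := by
  intro F hF
  have ht : insert t F ∈ L.faces := h.subset (h.eq ▸ .inl (.inr ⟨F, hF, rfl⟩))
  have ht' : insert t' F ∈ L.faces := h.subset (h.eq ▸ .inr ⟨F, hF, rfl⟩)
  refine ⟨h.zsubset hF, ht, ht', fun v hv => ?_⟩
  have hlabel := h.labels v (h.zdown F hF {v} (Finset.singleton_subset_iff.2 hv)
    (Finset.singleton_nonempty v))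
  have hadj : ∀ {s}, s ∉ F → insert s F ∈ L.faces → m s v = 2 →
      (rightAngledGraph L m).Adj s v := fun hs hsF hsv =>
    ⟨adj_of_mem_face hsF (Finset.mem_insert_self _ _) (Finset.mem_insert_of_mem hv)
      (ne_of_mem_of_not_mem hv hs).symm, hsv, hm v _ ▸ hsv⟩
  exact ⟨hadj (h.t_notin F hF) ht hlabel.1, hadj (h.t'_notin F hF) ht' hlabel.2⟩

theorem IsRASuspData.suspension {Z : Set (Finset E3)} (h : IsRASuspData L m T Z t t')
    (hm : ∀ s t, m s t = m t s) :
    IsRASuspData L m (suspension L m t t') (suspensionBase L m t t') t t' where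
  subset := by
    rintro F (((hF | rfl | rfl) | ⟨G, hG, rfl⟩) | ⟨G, hG, rfl⟩)
    exacts [hF.1, h.subset (h.eq ▸ .inl (.inl (.inr (.inl rfl)))),
      h.subset (h.eq ▸ .inl (.inl (.inr (.inr rfl)))), hG.2.1, hG.2.2.1]
  zsubset _ hF := hF.1
  zdown F hF G hGF hG := ⟨L.down_closed hF.1 hGF hG,
    L.down_closed hF.2.1 (Finset.insert_subset_insert _ hGF) (Finset.insert_nonempty _ _),
    L.down_closed hF.2.2.1 (Finset.insert_subset_insert _ hGF) (Finset.insert_nonempty _ _),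
    fun v hv => hF.2.2.2 v (hGF hv)⟩
  znonempty := h.znonempty.mono (h.subset_suspensionBase hm)
  tne := h.tne
  t_notin F hF ht := (hF.2.2.2 t ht).1.1.ne rfl
  t'_notin F hF ht' := (hF.2.2.2 t' ht').2.1.ne rfl
  labels v hv :=
    have hvW := hv.2.2.2 v (Finset.mem_singleton_self v)
    ⟨hvW.1.2.1, hvW.2.2.1⟩
  eq := rfl

theorem IsInfMaxRASusp.exists_eq_suspension (h : IsInfMaxRASusp L m T)
    (hm : ∀ s t, m s t = m t s) : ∃ t t', t ≠ t' ∧ T = suspension L m t t' := by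
  obtain ⟨⟨Z, t, t', hT, -, -⟩, hmax⟩ := h
  have hZ := hT.subset_suspensionBase hm
  refine ⟨t, t', hT.tne, hmax _ ⟨_, t, t', hT.suspension hm⟩ ?_⟩
  rw [hT.eq]
  exact Set.union_subset_union (Set.union_subset_union (Set.union_subset_union_left _ hZ)
    (Set.image_mono hZ)) (Set.image_mono hZ)

theorem IsInfMaxRASusp.eq_of_subset (hT : IsInfMaxRASusp L m T) (hT' : IsInfMaxRASusp L m T')
    (h : T ⊆ T') : T = T' :=
  let ⟨Z, t, t', hZ, _⟩ := hT'.1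
  hT.2 T' ⟨Z, t, t', hZ⟩ h

theorem IsInfMaxRASusp.subset_faces (hT : IsInfMaxRASusp L m T) : T ⊆ L.faces :=
  let ⟨_, _, _, hZ, _⟩ := hT.1
  hZ.subset

end Suspension

section Circuits

open scoped Finset

/-- A 4-cycle of edges with label `2` that is full in `L`. By flagness, these are the Euclidean
4-circuits. -/
structure IsFullCircuit (L : SimplicialComplex ℝ E3) (m : E3 → E3 → ℕ) (v : Fin 4 → E3) : Prop
    extends IsFourCycle (rightAngledGraph L m) v where
  not_adj : ∀ i, ¬(oneSkeleton L).Adj (v i) (v (i + 2))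

/-- Two suspensions of full subcomplexes that meet exactly in a full circuit: the suspension points
of each are a pair of opposite vertices of the circuit. -/
def Crosses (L : SimplicialComplex ℝ E3) (m : E3 → E3 → ℕ) (S T : Set (Finset E3)) : Prop :=
  ∃ v, IsFullCircuit L m v ∧ S = suspension L m (v 0) (v 2) ∧ T = suspension L m (v 1) (v 3) ∧
    Disjoint ((rightAngledGraph L m).commonNeighbors (v 0) (v 2))
      ((rightAngledGraph L m).commonNeighbors (v 1) (v 3))

variable {L : SimplicialComplex ℝ E3} {m : E3 → E3 → ℕ} {S T : Set (Finset E3)}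
  {F G : Finset E3} {t t' w x y z : E3} {v : Fin 4 → E3}

theorem IsEuclidean4Circuit.isFullCircuit (hv : IsEuclidean4Circuit L m v)
    (hm : ∀ s t, m s t = m t s) (hf : RightAngledFlag L m) : IsFullCircuit L m v := by
  obtain ⟨hinj, hedge, hlabel, hflag⟩ := hv
  have hne : ∀ i j : Fin 4, i ≠ j → v i ≠ v j := fun i j h => hinj.ne h
  have hadj : ∀ i, (rightAngledGraph L m).Adj (v i) (v (i + 1)) := fun i =>
    ⟨⟨hne _ _ (by revert i; decide), hedge i⟩, hlabel i, hm _ _ ▸ hlabel i⟩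
  have h02 : ¬(oneSkeleton L).Adj (v 0) (v 2) := fun h => hflag <| .inl
    ⟨Finset.insert_comm (v 1) (v 0) {v 2} ▸ hf (hadj 0).symm (hadj 1) h,
      Finset.pair_comm (v 3) (v 2) ▸ Finset.insert_comm (v 3) (v 0) {v 2} ▸
        hf (hadj 3) (hadj 2).symm h⟩
  have h13 : ¬(oneSkeleton L).Adj (v 1) (v 3) := fun h => hflag <| .inr
    ⟨Finset.insert_comm (v 2) (v 1) {v 3} ▸ hf (hadj 1).symm (hadj 2) h,
      hf (hadj 0) (hadj 3).symm h⟩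
  refine ⟨⟨hadj, fun i => hne _ _ (by revert i; decide)⟩, fun i => ?_⟩
  fin_cases i
  exacts [h02, h13, fun h => h02 h.symm, fun h => h13 h.symm]

theorem IsFourCycle.mem_commonNeighbors {W : Type*} {G : SimpleGraph W} {v : Fin 4 → W}
    (hv : IsFourCycle G v) (i : Fin 4) :
    v (i + 1) ∈ G.commonNeighbors (v i) (v (i + 2)) ∧
      v (i + 3) ∈ G.commonNeighbors (v i) (v (i + 2)) := by
  have h0 := hv.adj i
  have h1 := hv.adj (i + 1)
  have h2 := hv.adj (i + 2)
  have h3 := hv.adj (i + 3)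
  simp only [add_assoc, show (1 + 1 : Fin 4) = 2 from rfl, show (2 + 1 : Fin 4) = 3 from rfl,
    show (3 + 1 : Fin 4) = 0 from rfl, add_zero] at h1 h2 h3
  exact ⟨⟨h0, h1.symm⟩, h3.symm, h2⟩

theorem suspension_eq_of_commonNeighbors_subset {a b c d : E3} (hf : RightAngledFlag L m)
    (hac : ¬(oneSkeleton L).Adj a c) (hbd : ¬(oneSkeleton L).Adj b d)
    (hb : b ∈ (rightAngledGraph L m).commonNeighbors a c)
    (hd : d ∈ (rightAngledGraph L m).commonNeighbors a c)
    (hw : w ∈ (rightAngledGraph L m).commonNeighbors a c)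
    (hsub : (rightAngledGraph L m).commonNeighbors b d ⊆ {a, c, w})
    (hS : IsInfMaxRASusp L m (suspension L m b d)) (hT : IsInfMaxRASusp L m (suspension L m a c)) :
    suspension L m b d = suspension L m a c := by
  refine hS.eq_of_subset hT fun F hF => ?_
  have hFface := hS.subset_faces hF
  have hFv : ∀ x ∈ F, x = a ∨ x = c ∨ x = b ∨ x = d ∨ x = w := fun x hx => by
    obtain rfl | rfl | hx := eq_or_mem_commonNeighbors_of_mem_suspension hF hx
    · tauto
    · tauto
    · obtain h | h | h := hsub hx <;> tauto
  refine mem_suspension_of_card_sdiff_le_two hf hac hFface (fun x hx => ?_) ?_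
  · rw [mem_vertexSet_suspension]
    obtain rfl | rfl | rfl | rfl | rfl := hFv x hx <;> tauto
  obtain ⟨p, hp⟩ : ∃ p, F \ {a, c} ⊆ {p, w} := by
    by_cases hbF : b ∈ F
    · refine ⟨b, fun x hx => ?_⟩
      simp only [Finset.mem_sdiff, Finset.mem_insert, Finset.mem_singleton] at hx ⊢
      obtain h | h | h | rfl | h := hFv x hx.1
      iterate 3 tauto
      · exact .inl (by_contra fun h => hbd (adj_of_mem_face hFface hbF hx.1 (Ne.symm h)))
      · exact .inr h
    · refine ⟨d, fun x hx => ?_⟩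
      simp only [Finset.mem_sdiff, Finset.mem_insert, Finset.mem_singleton] at hx ⊢
      obtain h | h | rfl | h | h := hFv x hx.1 <;> tauto
  exact (Finset.card_le_card hp).trans Finset.card_le_two

namespace IsFullCircuit

theorem rotate (hv : IsFullCircuit L m v) (i : Fin 4) : IsFullCircuit L m fun j => v (j + i) where
  toIsFourCycle := hv.toIsFourCycle.rotate i
  not_adj j := by simpa only [add_right_comm] using hv.not_adj (j + i)

theorem isFourCycle_oneSkeleton (hv : IsFullCircuit L m v) : IsFourCycle (oneSkeleton L) v :=
  ⟨fun i => (hv.adj i).1, hv.ne⟩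

theorem mem_vertexSet_suspension (hv : IsFullCircuit L m v) (i j : Fin 4) :
    v j ∈ vertexSet (suspension L m (v i) (v (i + 2))) := by
  have hj : j = i ∨ j = i + 2 ∨ j = i + 1 ∨ j = i + 3 := by revert i j; decide
  rw [CoxOrb.mem_vertexSet_suspension]
  obtain rfl | rfl | rfl | rfl := hj
  exacts [.inl rfl, .inr (.inl rfl), .inr (.inr (hv.mem_commonNeighbors i).1),
    .inr (.inr (hv.mem_commonNeighbors i).2)]

theorem exists_eq_image (hv : IsFullCircuit L m v) (hF : F ∈ L.faces) (hGF : G ⊆ F)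
    (hG : ∀ x ∈ G, x ∈ Set.range v) :
    ∃ I : Finset (Fin 4), (∀ i ∈ I, i + 2 ∉ I) ∧ G = I.image v := by
  refine ⟨Finset.univ.filter (v · ∈ G), fun i hi hi' => hv.not_adj i ?_, ?_⟩
  · simp only [Finset.mem_filter_univ] at hi hi'
    exact adj_of_mem_face hF (hGF hi) (hGF hi') (hv.ne i)
  · ext x
    simp only [Finset.mem_image, Finset.mem_filter_univ]
    refine ⟨fun hx => ?_, fun ⟨_, hi, hix⟩ => hix ▸ hi⟩
    obtain ⟨i, rfl⟩ := hG x hx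
    exact ⟨i, hx, rfl⟩

theorem card_le_two (hv : IsFullCircuit L m v) (hF : F ∈ L.faces) (hGF : G ⊆ F)
    (hG : ∀ x ∈ G, x ∈ Set.range v) : #G ≤ 2 := by
  obtain ⟨I, hI, rfl⟩ := hv.exists_eq_image hF hGF hG
  have hcard : ∀ I : Finset (Fin 4), (∀ i ∈ I, i + 2 ∉ I) → #I ≤ 2 := by decide
  exact Finset.card_image_le.trans (hcard I hI)

theorem mem_circuitComplex (hv : IsFullCircuit L m v) (hF : F ∈ L.faces)
    (hFv : ∀ x ∈ F, x ∈ Set.range v) : F ∈ circuitComplex v := by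
  obtain ⟨I, hI, rfl⟩ := hv.exists_eq_image hF Finset.Subset.rfl hFv
  have hcases : ∀ I : Finset (Fin 4), I.Nonempty → (∀ i ∈ I, i + 2 ∉ I) →
      (∃ i, I = {i}) ∨ ∃ i, I = {i, i + 1} := by decide
  obtain ⟨i, rfl⟩ | ⟨i, rfl⟩ :=
    hcases I (Finset.image_nonempty.1 (L.nonempty_of_mem_faces hF)) hI
  · exact .inl ⟨i, Finset.image_singleton ..⟩
  · exact .inr ⟨i, by simp only [Finset.image_insert, Finset.image_singleton]⟩

theorem commonNeighbors_or_suspension_eq (hv : IsFullCircuit L m v)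
    (hvT : ∀ i, v i ∈ vertexSet (suspension L m t t')) :
    (∀ i, v i ∈ (rightAngledGraph L m).commonNeighbors t t') ∨
      suspension L m t t' = suspension L m (v 0) (v 2) ∨
      suspension L m t t' = suspension L m (v 1) (v 3) := by
  have h : ∀ i, v i ∈ (rightAngledGraph L m).commonNeighbors t t' ∨
      suspension L m t t' = suspension L m (v i) (v (i + 2)) := fun i =>
    commonNeighbors_or_suspension_eq_of_not_adj (hv.ne i) (hv.not_adj i) (hvT i) (hvT _)
  by_cases hW : ∀ i, v i ∈ (rightAngledGraph L m).commonNeighbors t t'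
  · exact .inl hW
  obtain ⟨i, hi⟩ := not_forall.1 hW
  have hsusp := (h i).resolve_left hi
  right
  fin_cases i
  exacts [.inl hsusp, .inr hsusp, .inl (hsusp.trans (suspension_comm _ _)),
    .inr (hsusp.trans (suspension_comm _ _))]

theorem not_adj_of_commonNeighbors (hG : KuratowskiPlanar (oneSkeleton L))
    (hv : IsFullCircuit L m v) (hvt : ∀ i, v i ∈ (rightAngledGraph L m).commonNeighbors t t') :
    ¬(oneSkeleton L).Adj t t' :=
  hG.not_adj_of_fourCycle_commonNeighbors hv.isFourCycle_oneSkeleton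
    fun i => commonNeighbors_rightAngledGraph_subset (hvt i)

theorem octahedron (hG : KuratowskiPlanar (oneSkeleton L)) (hv : IsFullCircuit L m v)
    (hvt : ∀ i, v i ∈ (rightAngledGraph L m).commonNeighbors t t') (htt : t ≠ t') (i : Fin 4) :
    IsFullCircuit L m ![t, v (i + 1), t', v (i + 3)] where
  toIsFourCycle := .mk' (hvt _).1 (hvt _).2.symm (hvt _).2 (hvt _).1.symm htt
    (hv.toIsFourCycle.injective.ne (by revert i; decide))
  not_adj j := by
    have hn := hv.not_adj_of_commonNeighbors hG hvt
    have hn' : ¬(oneSkeleton L).Adj (v (i + 1)) (v (i + 3)) := by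
      simpa only [add_assoc, show (1 + 2 : Fin 4) = 3 from rfl] using hv.not_adj (i + 1)
    fin_cases j
    exacts [hn, hn', fun h => hn h.symm, fun h => hn' h.symm]

theorem suspension_opposite_eq (hG : KuratowskiPlanar (oneSkeleton L)) (hf : RightAngledFlag L m)
    (hv : IsFullCircuit L m v) (hvt : ∀ i, v i ∈ (rightAngledGraph L m).commonNeighbors t t')
    (htt : t ≠ t') (i : Fin 4) (hT : IsInfMaxRASusp L m (suspension L m t t'))
    (hS : IsInfMaxRASusp L m (suspension L m (v i) (v (i + 2)))) :
    suspension L m (v i) (v (i + 2)) = suspension L m t t' := by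
  have hoct := hv.octahedron hG hvt htt i
  have hopp : ∀ j, ![t, v (i + 1), t', v (i + 3)] j ∈
      (oneSkeleton L).commonNeighbors (v i) (v (i + 2)) := by
    have hi := hv.isFourCycle_oneSkeleton.mem_commonNeighbors i
    intro j
    fin_cases j
    exacts [⟨(hvt _).1.1.symm, (hvt _).1.1.symm⟩, hi.1,
      ⟨(hvt _).2.1.symm, (hvt _).2.1.symm⟩, hi.2]
  have hverts : ∀ x ∈ vertexSet (suspension L m (v i) (v (i + 2))),
      x = t ∨ x = t' ∨ x ∈ Set.range v := by
    intro x hx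
    obtain rfl | rfl | hx := CoxOrb.mem_vertexSet_suspension.1 hx
    · exact .inr (.inr ⟨_, rfl⟩)
    · exact .inr (.inr ⟨_, rfl⟩)
    obtain ⟨j, rfl⟩ := hG.commonNeighbors_subset_fourCycle hoct.isFourCycle_oneSkeleton hopp
      (hv.ne i) (commonNeighbors_rightAngledGraph_subset hx)
    fin_cases j
    exacts [.inl rfl, .inr (.inr ⟨_, rfl⟩), .inr (.inl rfl), .inr (.inr ⟨_, rfl⟩)]
  refine hS.eq_of_subset hT fun F hF => ?_
  have hFv := fun x hx => hverts x (mem_vertexSet_of_mem_suspension hF hx)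
  refine mem_suspension_of_card_sdiff_le_two hf (hv.not_adj_of_commonNeighbors hG hvt)
    (hS.subset_faces hF) (fun x hx => ?_) (hv.card_le_two (hS.subset_faces hF)
    Finset.sdiff_subset fun x hx => ?_)
  · refine CoxOrb.mem_vertexSet_suspension.2 ((hFv x hx).imp_right (Or.imp_right ?_))
    rintro ⟨j, rfl⟩
    exact hvt j
  · simp only [Finset.mem_sdiff, Finset.mem_insert, Finset.mem_singleton] at hx
    have := hFv x hx.1
    tauto

theorem suspension_eq_of_commonNeighbors (hG : KuratowskiPlanar (oneSkeleton L))
    (hf : RightAngledFlag L m) (hm : ∀ s t, m s t = m t s) (hv : IsFullCircuit L m v)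
    (hvt : ∀ i, v i ∈ (rightAngledGraph L m).commonNeighbors t t') (htt : t ≠ t')
    (hS : IsInfMaxRASusp L m (suspension L m t t')) (hT : IsInfMaxRASusp L m T)
    (hvT : ∀ i, v i ∈ vertexSet T) : suspension L m t t' = T := by
  obtain ⟨s, s', hss, rfl⟩ := hT.exists_eq_suspension hm
  obtain hvs | h | h := hv.commonNeighbors_or_suspension_eq hvT
  · have hapex : ∀ {r}, (∀ i, (rightAngledGraph L m).Adj r (v i)) → r = t ∨ r = t' := fun hr =>
      hG.eq_or_eq_of_fourCycle_commonNeighbors hv.isFourCycle_oneSkeleton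
        (fun i => commonNeighbors_rightAngledGraph_subset (hvt i)) htt fun i => (hr i).1
    obtain rfl | rfl := hapex fun i => (hvs i).1 <;> obtain rfl | rfl := hapex fun i => (hvs i).2
    exacts [absurd rfl hss, rfl, suspension_comm _ _, absurd rfl hss]
  · rw [h] at hT ⊢
    exact (hv.suspension_opposite_eq hG hf hvt htt 0 hS hT).symm
  · rw [h] at hT ⊢
    exact (hv.suspension_opposite_eq hG hf hvt htt 1 hS hT).symm

theorem eq_of_mem_commonNeighbors (hG : KuratowskiPlanar (oneSkeleton L))
    (hv : IsFullCircuit L m v)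
    (hw : w ∈ (rightAngledGraph L m).commonNeighbors (v 0) (v 2))
    (hw' : w ∈ (rightAngledGraph L m).commonNeighbors (v 1) (v 3))
    (hx : x ∈ (rightAngledGraph L m).commonNeighbors (v 0) (v 2))
    (hy : y ∈ (rightAngledGraph L m).commonNeighbors (v 1) (v 3))
    (hxv : x ∉ ({v 1, v 3, w} : Set E3)) (hyv : y ∉ ({v 0, v 2, w} : Set E3)) : x = y := by
  simp only [Set.mem_insert_iff, Set.mem_singleton_iff, not_or] at hxv hyv
  refine hG.eq_of_adj_compl_fourCycle hv.isFourCycle_oneSkeleton hx.1.1.symm hx.2.1.symm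
    hy.1.1.symm hy.2.1.symm (w := w) (fun i => ?_) hxv.2.2 hyv.2.2 ?_ ?_
  · fin_cases i
    exacts [hw.1.1.symm, hw'.1.1.symm, hw.2.1.symm, hw'.2.1.symm]
  · rintro ⟨i, rfl⟩
    fin_cases i
    exacts [hx.1.1.ne rfl, hxv.1 rfl, hx.2.1.ne rfl, hxv.2.1 rfl]
  · rintro ⟨i, rfl⟩
    fin_cases i
    exacts [hyv.1 rfl, hy.1.1.ne rfl, hyv.2.1 rfl, hy.2.1.ne rfl]

theorem suspension_eq_or_disjoint (hG : KuratowskiPlanar (oneSkeleton L))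
    (hf : RightAngledFlag L m) (hm : ∀ s t, m s t = m t s) (hv : IsFullCircuit L m v)
    (hS : IsInfMaxRASusp L m (suspension L m (v 0) (v 2)))
    (hT : IsInfMaxRASusp L m (suspension L m (v 1) (v 3))) :
    suspension L m (v 0) (v 2) = suspension L m (v 1) (v 3) ∨
      Disjoint ((rightAngledGraph L m).commonNeighbors (v 0) (v 2))
        ((rightAngledGraph L m).commonNeighbors (v 1) (v 3)) := by
  refine or_iff_not_imp_right.2 fun hdisj => ?_
  obtain ⟨w, hwS, hwT⟩ := Set.not_disjoint_iff.1 hdisj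
  obtain ⟨h1, h3⟩ := hv.mem_commonNeighbors 0
  obtain ⟨h2, h0⟩ := hv.mem_commonNeighbors 1
  by_cases hx : (rightAngledGraph L m).commonNeighbors (v 0) (v 2) ⊆ {v 1, v 3, w}
  · exact suspension_eq_of_commonNeighbors_subset hf (hv.not_adj 1) (hv.not_adj 0) h0 h2 hwT hx
      hS hT
  by_cases hy : (rightAngledGraph L m).commonNeighbors (v 1) (v 3) ⊆ {v 0, v 2, w}
  · exact (suspension_eq_of_commonNeighbors_subset hf (hv.not_adj 0) (hv.not_adj 1) h1 h3 hwS hy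
      hT hS).symm
  obtain ⟨x, hx, hxv⟩ := Set.not_subset.1 hx
  obtain ⟨y, hy, hyv⟩ := Set.not_subset.1 hy
  obtain rfl := hv.eq_of_mem_commonNeighbors hG hwS hwT hx hy hxv hyv
  have hwx : w ≠ x := fun h => hxv (.inr (.inr h.symm))
  have hvw : ∀ i, v i ∈ (rightAngledGraph L m).commonNeighbors w x := by
    have hmem : ∀ {a}, (rightAngledGraph L m).Adj a w → (rightAngledGraph L m).Adj a x →
        a ∈ (rightAngledGraph L m).commonNeighbors w x := fun h h' => ⟨h.symm, h'.symm⟩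
    intro i
    fin_cases i
    exacts [hmem hwS.1 hx.1, hmem hwT.1 hy.1, hmem hwS.2 hx.2, hmem hwT.2 hy.2]
  refine (hv.octahedron hG hvw hwx 0).suspension_eq_of_commonNeighbors hG hf hm
    (fun i => ?_) (hv.ne 0) hS hT fun i => CoxOrb.mem_vertexSet_suspension.2 ?_
  · fin_cases i
    exacts [hwS, h1, hx, h3]
  · fin_cases i
    exacts [.inr (.inr hwT), .inl rfl, .inr (.inr hy), .inr (.inl rfl)]

end IsFullCircuit

theorem Crosses.symm (h : Crosses L m S T) : Crosses L m T S := by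
  obtain ⟨v, hv, rfl, rfl, hdisj⟩ := h
  exact ⟨_, hv.rotate 1, rfl, suspension_comm _ _,
    SimpleGraph.commonNeighbors_symm _ (v 0) (v 2) ▸ hdisj.symm⟩

theorem IsFullCircuit.eq_or_crosses (hG : KuratowskiPlanar (oneSkeleton L))
    (hf : RightAngledFlag L m) (hm : ∀ s t, m s t = m t s) (hv : IsFullCircuit L m v)
    (hS : IsInfMaxRASusp L m S) (hT : IsInfMaxRASusp L m T) (hvS : ∀ i, v i ∈ vertexSet S)
    (hvT : ∀ i, v i ∈ vertexSet T) : S = T ∨ Crosses L m S T := by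
  obtain ⟨s, s', hss, rfl⟩ := hS.exists_eq_suspension hm
  obtain ⟨t, t', htt, rfl⟩ := hT.exists_eq_suspension hm
  obtain hvs | hS' := hv.commonNeighbors_or_suspension_eq hvS
  · exact .inl (hv.suspension_eq_of_commonNeighbors hG hf hm hvs hss hS hT hvT)
  obtain hvt | hT' := hv.commonNeighbors_or_suspension_eq hvT
  · exact .inl (hv.suspension_eq_of_commonNeighbors hG hf hm hvt htt hT hS hvS).symm
  obtain hS' | hS' := hS' <;> obtain hT' | hT' := hT' <;> rw [hS'] at hS ⊢ <;> rw [hT'] at hT ⊢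
  · exact .inl rfl
  · exact (hv.suspension_eq_or_disjoint hG hf hm hS hT).imp_right fun h => ⟨v, hv, rfl, rfl, h⟩
  · exact (hv.suspension_eq_or_disjoint hG hf hm hT hS).imp Eq.symm
      fun h => Crosses.symm ⟨v, hv, rfl, rfl, h⟩
  · exact .inl rfl

theorem IsFullCircuit.vertexSet_inter (hv : IsFullCircuit L m v)
    (hdisj : Disjoint ((rightAngledGraph L m).commonNeighbors (v 0) (v 2))
      ((rightAngledGraph L m).commonNeighbors (v 1) (v 3))) :
    vertexSet (suspension L m (v 0) (v 2)) ∩ vertexSet (suspension L m (v 1) (v 3)) =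
      Set.range v := by
  refine Set.Subset.antisymm ?_ ?_
  · rintro x ⟨hxS, hxT⟩
    obtain rfl | rfl | hxS := CoxOrb.mem_vertexSet_suspension.1 hxS
    · exact ⟨_, rfl⟩
    · exact ⟨_, rfl⟩
    obtain rfl | rfl | hxT := CoxOrb.mem_vertexSet_suspension.1 hxT
    · exact ⟨_, rfl⟩
    · exact ⟨_, rfl⟩
    exact absurd hxT (Set.disjoint_left.1 hdisj hxS)
  · rintro _ ⟨j, rfl⟩
    exact ⟨hv.mem_vertexSet_suspension 0 j, hv.mem_vertexSet_suspension 1 j⟩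

theorem Crosses.seifertRel (h : Crosses L m S T) (hf : RightAngledFlag L m)
    (hS : IsInfMaxRASusp L m S) (hT : IsInfMaxRASusp L m T) : SeifertRel L m S T := by
  refine ⟨hS, hT, ?_⟩
  obtain ⟨v, hv, rfl, rfl, hdisj⟩ := h
  have hinter := hv.vertexSet_inter hdisj
  refine ⟨v, ⟨hv.toIsFourCycle.injective, fun i => (hv.adj i).1.2, fun i => (hv.adj i).2.1, ?_⟩, ?_⟩
  · rintro (⟨-, h⟩ | ⟨-, h⟩)
    · exact hv.not_adj 0 (adj_of_mem_face h (by simp) (by simp) (hv.ne 0))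
    · exact hv.not_adj 1 (adj_of_mem_face h (by simp) (by simp) (hv.ne 1))
  refine Set.Subset.antisymm (fun F ⟨hFS, hFT⟩ => ?_) ?_
  · exact hv.mem_circuitComplex (hS.subset_faces hFS) fun x hx => hinter.subset
      ⟨mem_vertexSet_of_mem_suspension hFS hx, mem_vertexSet_of_mem_suspension hFT hx⟩
  · rintro _ (⟨i, rfl⟩ | ⟨i, rfl⟩)
    · exact hinter.superset ⟨i, rfl⟩
    · exact ⟨edge_mem_suspension hf (hv.not_adj 0) (hv.adj i).1
        (hv.mem_vertexSet_suspension 0 i) (hv.mem_vertexSet_suspension 0 _),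
        edge_mem_suspension hf (hv.not_adj 1) (hv.adj i).1
        (hv.mem_vertexSet_suspension 1 i) (hv.mem_vertexSet_suspension 1 _)⟩

theorem SeifertRel.eq_or_crosses (h : SeifertRel L m S T) (hG : KuratowskiPlanar (oneSkeleton L))
    (hf : RightAngledFlag L m) (hm : ∀ s t, m s t = m t s) : S = T ∨ Crosses L m S T := by
  obtain ⟨hS, hT, v, hv, hST⟩ := h
  have hvST : ∀ i, {v i} ∈ S ∩ T := fun i => hST ▸ .inl ⟨i, rfl⟩
  exact (hv.isFullCircuit hm hf).eq_or_crosses hG hf hm hS hT (fun i => (hvST i).1)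
    fun i => (hvST i).2

theorem Crosses.not_reachableIn (h : Crosses L m S T) (hG : KuratowskiPlanar (oneSkeleton L))
    (hxS : x ∈ vertexSet S) (hxT : x ∉ vertexSet T) (hzT : z ∈ vertexSet T)
    (hzS : z ∉ vertexSet S) :
    ¬ReachableIn (oneSkeleton L) (vertexSet S ∩ vertexSet T)ᶜ x z := by
  obtain ⟨v, hv, rfl, rfl, hdisj⟩ := h
  rw [hv.vertexSet_inter hdisj]
  obtain rfl | rfl | hx := mem_vertexSet_suspension.1 hxS
  · exact absurd (hv.mem_vertexSet_suspension 1 0) hxT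
  · exact absurd (hv.mem_vertexSet_suspension 1 2) hxT
  obtain rfl | rfl | hz := mem_vertexSet_suspension.1 hzT
  · exact absurd (hv.mem_vertexSet_suspension 0 1) hzS
  · exact absurd (hv.mem_vertexSet_suspension 0 3) hzS
  intro hxz
  have := hG.eq_of_reachableIn_compl_fourCycle hv.isFourCycle_oneSkeleton hx.1.1.symm
    hx.2.1.symm hz.1.1.symm hz.2.1.symm hxz
  exact hxT (this ▸ hzT)

theorem Crosses.exists_suspension_eq (h : Crosses L m S T) (hxS : x ∈ vertexSet S)
    (hxT : x ∉ vertexSet T) : ∃ a ∈ vertexSet S ∩ vertexSet T, ∃ c ∈ vertexSet S ∩ vertexSet T,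
      a ≠ c ∧ ¬(oneSkeleton L).Adj a c ∧ S = suspension L m a c ∧
      x ∈ (oneSkeleton L).commonNeighbors a c := by
  obtain ⟨v, hv, rfl, rfl, hdisj⟩ := h
  rw [hv.vertexSet_inter hdisj]
  obtain rfl | rfl | hx := mem_vertexSet_suspension.1 hxS
  · exact absurd (hv.mem_vertexSet_suspension 1 0) hxT
  · exact absurd (hv.mem_vertexSet_suspension 1 2) hxT
  · exact ⟨v 0, ⟨0, rfl⟩, v 2, ⟨2, rfl⟩, hv.ne 0, hv.not_adj 0, rfl,
      commonNeighbors_rightAngledGraph_subset hx⟩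

theorem Crosses.eq_suspension_of_not_adj (h : Crosses L m S T)
    (hx : x ∈ vertexSet S ∩ vertexSet T) (hy : y ∈ vertexSet S ∩ vertexSet T) (hxy : x ≠ y)
    (hn : ¬(oneSkeleton L).Adj x y) : S = suspension L m x y ∨ T = suspension L m x y := by
  obtain ⟨v, hv, rfl, rfl, hdisj⟩ := h
  rw [hv.vertexSet_inter hdisj] at hx hy
  obtain ⟨i, rfl⟩ := hx
  obtain ⟨j, rfl⟩ := hy
  have hij : ∀ i j : Fin 4, j = i ∨ j = i + 1 ∨ i = j + 1 ∨ j = i + 2 := by decide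
  obtain rfl | rfl | rfl | rfl := hij i j
  · exact absurd rfl hxy
  · exact absurd (hv.adj i).1 hn
  · exact absurd (hv.adj j).1.symm hn
  fin_cases i
  exacts [.inl rfl, .inr rfl, .inl (suspension_comm _ _), .inr (suspension_comm _ _)]

end Circuits

section SeifertClasses

/-- The graph whose connected components are the equivalence classes that define the Seifert
subcomplexes. -/
def seifertGraph (L : SimplicialComplex ℝ E3) (m : E3 → E3 → ℕ) :
    SimpleGraph (Set (Finset E3)) :=
  .fromRel (SeifertRel L m)

variable {L : SimplicialComplex ℝ E3} {m : E3 → E3 → ℕ} {S T S₀ S₁ : Set (Finset E3)}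
  {x z : E3} {v : Fin 4 → E3}

theorem reachable_fromRel_iff_eqvGen {α : Type*} {r : α → α → Prop} {a b : α} :
    (SimpleGraph.fromRel r).Reachable a b ↔ Relation.EqvGen r a b := by
  constructor
  · rintro ⟨p⟩
    induction p with
    | nil => exact .refl _
    | cons hab _ ih =>
      obtain h | h := hab.2
      exacts [.trans _ _ _ (.rel _ _ h) ih, .trans _ _ _ (.symm _ _ (.rel _ _ h)) ih]
  · intro h
    induction h with
    | rel a b hab =>
      obtain rfl | hne := eq_or_ne a b
      exacts [.refl _, SimpleGraph.Adj.reachable ⟨hne, .inl hab⟩]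
    | refl => exact .refl _
    | symm _ _ _ ih => exact ih.symm
    | trans _ _ _ _ _ ih ih' => exact ih.trans ih'

theorem isInfMaxRASusp_iff_of_eqvGen (h : Relation.EqvGen (SeifertRel L m) S T) :
    IsInfMaxRASusp L m S ↔ IsInfMaxRASusp L m T := by
  induction h with
  | rel _ _ h => exact iff_of_true h.1 h.2.1
  | refl => rfl
  | symm _ _ _ ih => exact ih.symm
  | trans _ _ _ _ _ ih ih' => exact ih.trans ih'

theorem crosses_of_seifertGraph_adj (hG : KuratowskiPlanar (oneSkeleton L))
    (hf : RightAngledFlag L m) (hm : ∀ s t, m s t = m t s) (h : (seifertGraph L m).Adj S T) :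
    Crosses L m S T := by
  obtain ⟨hne, h | h⟩ := h
  · exact (h.eq_or_crosses hG hf hm).resolve_left hne
  · exact ((h.eq_or_crosses hG hf hm).resolve_left hne.symm).symm

theorem not_reachableIn_of_isPath (hG : KuratowskiPlanar (oneSkeleton L))
    (hf : RightAngledFlag L m) (hm : ∀ s t, m s t = m t s) {p : (seifertGraph L m).Walk S₁ T}
    (h : (seifertGraph L m).Adj S₀ S₁) (hp : (SimpleGraph.Walk.cons h p).IsPath)
    (hx₀ : x ∈ vertexSet S₀) (hx₁ : x ∉ vertexSet S₁) (hz : z ∈ vertexSet T)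
    (hz₀₁ : z ∉ vertexSet S₀ ∩ vertexSet S₁) :
    ¬ReachableIn (oneSkeleton L) (vertexSet S₀ ∩ vertexSet S₁)ᶜ x z := by
  have h₀₁ := crosses_of_seifertGraph_adj hG hf hm h
  induction p generalizing S₀ x z with
  | nil => exact h₀₁.not_reachableIn hG hx₀ hx₁ hz fun hz₀ => hz₀₁ ⟨hz₀, hz⟩
  | @cons S₁ S₂ T h' q ih =>
    have h₁₂ := crosses_of_seifertGraph_adj hG hf hm h'
    rw [SimpleGraph.Walk.cons_isPath_iff] at hp
    intro hxz
    obtain ⟨y, hy, hxy⟩ | hxz := hxz.exists_mem_or_compl (vertexSet S₁)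
    · exact h₀₁.not_reachableIn hG hx₀ hx₁ hy (fun hy₀ => hxy.right_mem ⟨hy₀, hy⟩) hxy
    have hneighbor : ∀ e ∈ vertexSet S₁, (oneSkeleton L).Adj e x → e ∈ vertexSet S₂ := by
      intro e he hex
      by_contra he₂
      have hxz' : ReachableIn (oneSkeleton L) (vertexSet S₁ ∩ vertexSet S₂)ᶜ x z :=
        hxz.mono (Set.compl_subset_compl.2 Set.inter_subset_left)
      exact ih h' hp.1 he he₂ hz (fun h => hxz.right_mem h.1) h₁₂
        (.trans (.of_adj hex (fun h => he₂ h.2) hxz'.left_mem) hxz')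
    obtain ⟨a, ha, c, hc, hac, hn, hS₀, hxac⟩ := h₀₁.exists_suspension_eq hx₀ hx₁
    obtain hS | hS := h₁₂.eq_suspension_of_not_adj ⟨ha.2, hneighbor a ha.2 hxac.1⟩
      ⟨hc.2, hneighbor c hc.2 hxac.2⟩ hac hn
    · exact h.ne (hS₀.trans hS.symm)
    · obtain rfl : S₀ = S₂ := hS₀.trans hS.symm
      exact hp.2 (List.mem_cons_of_mem _ q.start_mem_support)

theorem IsFullCircuit.preimage_vertexSet_subset_or (hG : KuratowskiPlanar (oneSkeleton L))
    (hf : RightAngledFlag L m) (hm : ∀ s t, m s t = m t s) (hv : IsFullCircuit L m v)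
    {p : (seifertGraph L m).Walk S₁ T} (h : (seifertGraph L m).Adj S₀ S₁)
    (hp : (SimpleGraph.Walk.cons h p).IsPath) :
    v ⁻¹' vertexSet S₀ ⊆ v ⁻¹' vertexSet S₁ ∨ v ⁻¹' vertexSet T ⊆ v ⁻¹' vertexSet S₀ := by
  by_contra! hsub
  obtain ⟨j, hj₀, hj₁⟩ := Set.not_subset.1 hsub.1
  obtain ⟨l, hl, hl₀⟩ := Set.not_subset.1 hsub.2
  have hjl₀₁ := not_reachableIn_of_isPath hG hf hm h hp hj₀ hj₁ hl fun h => hl₀ h.1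
  have hj : v j ∈ (vertexSet S₀ ∩ vertexSet S₁)ᶜ := fun h => hj₁ h.2
  have hl : v l ∈ (vertexSet S₀ ∩ vertexSet S₁)ᶜ := fun h => hl₀ h.1
  have hcommon : ∀ y ∈ (oneSkeleton L).commonNeighbors (v j) (v l),
      y ∈ vertexSet S₀ ∩ vertexSet S₁ := fun y hy => by_contra fun hy₀₁ =>
    hjl₀₁ (.trans (.of_adj hy.1 hj hy₀₁) (.of_adj hy.2.symm hy₀₁ hl))
  have hcases : ∀ j l : Fin 4, l = j ∨ l = j + 1 ∨ j = l + 1 ∨ l = j + 2 := by decide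
  obtain rfl | rfl | rfl | rfl := hcases j l
  · exact hl₀ hj₀
  · exact hjl₀₁ (.of_adj (hv.adj j).1 hj hl)
  · exact hjl₀₁ (.of_adj (hv.adj l).1.symm hj hl)
  have hopp := hv.isFourCycle_oneSkeleton.mem_commonNeighbors j
  have hj₁₃ : j + 3 = j + 1 + 2 := by rw [add_assoc]; rfl
  obtain hS | hS := (crosses_of_seifertGraph_adj hG hf hm h).eq_suspension_of_not_adj
    (hcommon _ hopp.1) (hcommon _ (hj₁₃ ▸ hopp.2)) (hv.ne (j + 1)) (hv.not_adj (j + 1))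
  · exact hl₀ (hS ▸ hv.mem_vertexSet_suspension (j + 1) (j + 2))
  · exact hj₁ (hS ▸ hv.mem_vertexSet_suspension (j + 1) j)

theorem IsFullCircuit.preimage_vertexSet_subset (hG : KuratowskiPlanar (oneSkeleton L))
    (hf : RightAngledFlag L m) (hm : ∀ s t, m s t = m t s) (hv : IsFullCircuit L m v)
    {p : (seifertGraph L m).Walk S T} (hp : p.IsPath)
    (hS : MaximalFor ((seifertGraph L m).Reachable S) (fun U => v ⁻¹' vertexSet U) S) :
    v ⁻¹' vertexSet T ⊆ v ⁻¹' vertexSet S := by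
  induction p with
  | nil => exact subset_rfl
  | @cons S₀ S₁ T h q ih =>
    obtain hsub | hsub := hv.preimage_vertexSet_subset_or hG hf hm h hp
    · have hsub' := hS.2 h.reachable hsub
      exact (ih (SimpleGraph.Walk.IsPath.of_cons hp) ⟨.refl _, fun U hU hle =>
        (hS.2 (h.reachable.trans hU) (hsub.trans hle)).trans hsub⟩).trans hsub'
    · exact hsub

theorem IsFullCircuit.exists_eqvGen_vertexSet (hG : KuratowskiPlanar (oneSkeleton L))
    (hf : RightAngledFlag L m) (hm : ∀ s t, m s t = m t s) (hv : IsFullCircuit L m v)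
    (hvS : ∀ i, ∃ T, Relation.EqvGen (SeifertRel L m) S T ∧ v i ∈ vertexSet T) :
    ∃ T, Relation.EqvGen (SeifertRel L m) S T ∧ ∀ i, v i ∈ vertexSet T := by
  obtain ⟨T, hT, hmax⟩ := Set.Finite.exists_maximalFor' (fun U => v ⁻¹' vertexSet U)
    {U | (seifertGraph L m).Reachable S U} (Set.toFinite _) ⟨S, .refl S⟩
  refine ⟨T, reachable_fromRel_iff_eqvGen.1 hT, fun i => ?_⟩
  obtain ⟨U, hU, hiU⟩ := hvS i
  obtain ⟨p, hp⟩ := (hT.symm.trans (reachable_fromRel_iff_eqvGen.2 hU)).exists_isPath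
  exact hv.preimage_vertexSet_subset hG hf hm hp
    ⟨.refl T, fun U' hU' hle => hmax (hT.trans hU') hle⟩ hiU

end SeifertClasses

end CoxOrb

theorem seifert_eq_of_common_circuit_general {L : SimplicialComplex ℝ E3} {m : E3 → E3 → ℕ}
    (hG : KuratowskiPlanar (oneSkeleton L)) (hf : RightAngledFlag L m)
    (hm : ∀ s t, m s t = m t s) {D₁ D₂ : Set (Finset E3)} (h₁ : IsSeifertSubcomplex L m D₁)
    (h₂ : IsSeifertSubcomplex L m D₂) {v : Fin 4 → E3} (hv : IsEuclidean4Circuit L m v)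
    (hv₁ : ∀ i, v i ∈ vertexSet D₁) (hv₂ : ∀ i, v i ∈ vertexSet D₂) : D₁ = D₂ := by
  obtain ⟨S₁, hS₁, rfl⟩ := h₁
  obtain ⟨S₂, hS₂, rfl⟩ := h₂
  have hv := hv.isFullCircuit hm hf
  obtain ⟨T₁, hST₁, hvT₁⟩ := hv.exists_eqvGen_vertexSet (S := S₁) hG hf hm
    fun i => let ⟨T, ⟨_, hT⟩, hi⟩ := hv₁ i; ⟨T, hT, hi⟩
  obtain ⟨T₂, hST₂, hvT₂⟩ := hv.exists_eqvGen_vertexSet (S := S₂) hG hf hm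
    fun i => let ⟨T, ⟨_, hT⟩, hi⟩ := hv₂ i; ⟨T, hT, hi⟩
  have hT₁ := (isInfMaxRASusp_iff_of_eqvGen hST₁).1 hS₁
  have hT₂ := (isInfMaxRASusp_iff_of_eqvGen hST₂).1 hS₂
  have hT : Relation.EqvGen (SeifertRel L m) T₁ T₂ := by
    obtain rfl | h := hv.eq_or_crosses hG hf hm hT₁ hT₂ hvT₁ hvT₂
    exacts [.refl _, .rel _ _ (h.seifertRel hf hT₁ hT₂)]
  have hS : Relation.EqvGen (SeifertRel L m) S₁ S₂ :=
    (hST₁.trans _ _ _ hT).trans _ _ _ (hST₂.symm _ _)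
  congr! 3 with U
  exact and_congr_right fun _ => ⟨(hS.symm _ _).trans _ _ _, hS.trans _ _ _⟩

/-- If two Seifert subcomplexes of a metric flag labeled triangulation of the
2-sphere both contain a common Euclidean 4-circuit, then they are equal. -/
theorem seifert_eq_of_common_circuit
    (L : SimplicialComplex ℝ E3) (m : E3 → E3 → ℕ)
    (hL : IsLabeledS2 L m) (hflag : MetricFlag L m)
    (D₁ D₂ : Set (Finset E3))
    (h₁ : IsSeifertSubcomplex L m D₁) (h₂ : IsSeifertSubcomplex L m D₂)
    (v : Fin 4 → E3) (hv : IsEuclidean4Circuit L m v)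
    (hsub₁ : circuitComplex v ⊆ D₁) (hsub₂ : circuitComplex v ⊆ D₂) :
    D₁ = D₂ := by
  have hG := kuratowskiPlanar_oneSkeleton hL.finite hL.sphere.some
  have hf := hflag.rightAngledFlag fun s t hst => two_pos.trans_le (hL.two_le s t hst.1 hst.2)
  exact seifert_eq_of_common_circuit_general hG hf hL.symm h₁ h₂ hv
    (fun i => hsub₁ (.inl ⟨i, rfl⟩)) fun i => hsub₂ (.inl ⟨i, rfl⟩)
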